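/- arXiv:2103.04457 — 2 statements merged into one kernel-verified Lean document; each statement's English description precedes it below -/
import Mathlib

section
/- Let m ≥ 2 be an integer and let the cyclic group ZMod m act on ℂ by k • z = exp(2πik/m)·z (a faithful action by rotations), act on ℂ × ℝ via this action on ℂ and trivially on ℝ, and act on the one-point compactifications OnePoint ℂ and OnePoint (ℂ × ℝ) by the induced actions fixing ∞ (based at ∞). Then the space Map^{ZMod m}_*(OnePoint ℂ, OnePoint (ℂ × ℝ)) of equivariant basepoint-preserving continuous maps is homotopy equivalent to Map_*(S¹, S³) × OnePoint ℝ × Map_*(S², S³), i.e. to Ω S³ × S¹ × Ω² S³. -/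
/-!
STATEMENT 2: For `m ≥ 2`, with `ZMod m` acting on `ℂ` by rotations
`k • z = exp(2πik/m)·z`, the space of equivariant based maps
`Map^{ZMod m}_*(OnePoint ℂ, OnePoint (ℂ × ℝ))` is homotopy equivalent to
`Ω S³ × S¹ × Ω² S³`.
-/

noncomputable section

/-- The rotation action of `k : ZMod m` on `ℂ`, `z ↦ exp(2πik/m)·z`. -/
def rotAct (m : ℕ) (k : ZMod m) (z : ℂ) : ℂ :=
  Complex.exp (2 * Real.pi * Complex.I * (k.val : ℂ) / (m : ℂ)) * z

/-- `Map_*(S^k, S^l)`: based maps between one-point compactifications of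
Euclidean spaces, based at `∞`. -/
abbrev BasedSphereMaps (k l : ℕ) : Type :=
  {f : C(OnePoint (EuclideanSpace ℝ (Fin k)), OnePoint (EuclideanSpace ℝ (Fin l))) //
    f OnePoint.infty = OnePoint.infty}

/-!
In polar coordinates `(x, u) ↦ u • x`, with `x` on a closed ray from `0` to `∞` and `u` on the
circle, an equivariant map `f` is untwisted to `h (u ^ m • x) = u⁻¹ • f (u • x)`. The only remaining
constraint on the based map `h` is that `h 0` is fixed by the circle. Identify `S³` with the unit
quaternions. Dividing `h` by a radial extension of its restriction to the ray leaves a map supported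
on the slit plane, that is, a point of `Ω² S³`; dividing the restriction by the meridian from `h 0`
to `∞` leaves a map supported on an open interval, that is, a point of `Ω S³`. What is left is the
value `h 0`, which ranges over the circle of fixed points.
-/

namespace CyclicRotation

open Function OnePoint Set Topology Filter NNReal

section Descent

variable {A B X X' Y Z : Type*} [TopologicalSpace A] [TopologicalSpace B] [TopologicalSpace X]
  [TopologicalSpace X'] [TopologicalSpace Y] [TopologicalSpace Z]

theorem isEmbedding_precomp {q : C(A, B)} (hq : IsProperMap q) (hs : Surjective q) :
    IsEmbedding fun g : C(B, Y) => g.comp q := by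
  refine ⟨⟨le_antisymm (ContinuousMap.continuous_precomp q).le_induced ?_⟩,
    fun g h hgh => ContinuousMap.ext (hs.forall.2 (DFunLike.congr_fun hgh))⟩
  rw [ContinuousMap.compactOpen_eq (X := B)]
  refine le_generateFrom ?_
  rintro _ ⟨K, hK, U, hU, rfl⟩
  refine ⟨{f | MapsTo f (q ⁻¹' K) U},
    ContinuousMap.isOpen_setOfPred_mapsTo (hq.isCompact_preimage hK) hU, ?_⟩
  ext g
  simp only [mem_preimage, mem_ofPred_eq, MapsTo, ContinuousMap.comp_apply, hs.forall]

theorem exists_comp_eq {q : C(A, B)} (hq : IsProperMap q) (hs : Surjective q) (f : C(A, Y))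
    (hf : FactorsThrough f q) : ∃ g : C(B, Y), g.comp q = f :=
  have hq' : IsQuotientMap q := hq.isClosedMap.isQuotientMap hq.continuous hs
  ⟨hq'.lift f hf, hq'.lift_comp f hf⟩

/-- Two spaces embedded in a third one with the same range are homeomorphic. -/
def homeomorphOfRangeEq {e : X → Z} {e' : X' → Z} (he : IsEmbedding e) (he' : IsEmbedding e')
    (h : range e = range e') : X ≃ₜ X' :=
  (he.toHomeomorph.trans (Homeomorph.setCongr h)).trans he'.toHomeomorph.symm

end Descent

/-- The space of maps from the one-point compactification of `X` to `Y` that send `∞` to `y₀`. -/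
abbrev BasedMaps (X : Type*) {Y : Type*} [TopologicalSpace X] [TopologicalSpace Y] (y₀ : Y) :
    Type _ :=
  {f : C(OnePoint X, Y) // f ∞ = y₀}

/-- A homeomorphism of the targets preserving the base points induces one of the spaces of based
maps. -/
def basedMapsCongr {X Y Z : Type*} [TopologicalSpace X] [TopologicalSpace Y] [TopologicalSpace Z]
    (Ψ : Y ≃ₜ Z) {y₀ : Y} {z₀ : Z} (h : Ψ y₀ = z₀) : BasedMaps X y₀ ≃ₜ BasedMaps X z₀ :=
  ((Homeomorph.refl (OnePoint X)).arrowCongr Ψ).subtype fun _ =>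
    ⟨fun hf => (congrArg Ψ hf).trans h, fun hf => Ψ.injective (Eq.trans hf h.symm)⟩

section Collapse

variable {A E Y : Type*} {j : E → A}

/-- The Pontryagin–Thom collapse of an injection `j : E → A`: the inverse of `j` on its range,
and `∞` elsewhere. -/
def collapse (j : E → A) : A → OnePoint E :=
  extend j OnePoint.some fun _ => ∞

theorem collapse_apply (hj : Injective j) (x : E) : collapse j (j x) = x :=
  hj.extend_apply _ _ _

theorem collapse_of_notMem {a : A} (ha : a ∉ range j) : collapse j a = ∞ :=
  extend_apply' _ _ _ ha

theorem collapse_surjective (hj : Injective j) (hne : (range j)ᶜ.Nonempty) :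
    Surjective (collapse j) := by
  intro x
  induction x with
  | infty => exact hne.imp fun _ => collapse_of_notMem
  | coe x => exact ⟨j x, collapse_apply hj x⟩

theorem factorsThrough_collapse (hj : Injective j) {f : A → Y} {y₀ : Y}
    (hf : ∀ a ∉ range j, f a = y₀) : FactorsThrough f (collapse j) := by
  intro a b hab
  by_cases ha : a ∈ range j <;> by_cases hb : b ∈ range j
  · obtain ⟨x, rfl⟩ := ha
    obtain ⟨y, rfl⟩ := hb
    rw [collapse_apply hj, collapse_apply hj, OnePoint.coe_eq_coe] at hab
    rw [hab]
  · obtain ⟨x, rfl⟩ := ha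
    rw [collapse_apply hj, collapse_of_notMem hb] at hab
    exact absurd hab (coe_ne_infty x)
  · obtain ⟨y, rfl⟩ := hb
    rw [collapse_apply hj, collapse_of_notMem ha] at hab
    exact absurd hab (infty_ne_coe y)
  · rw [hf a ha, hf b hb]

variable [TopologicalSpace A] [TopologicalSpace E] [TopologicalSpace Y]

theorem continuous_collapse [T2Space A] (hj : IsOpenEmbedding j) : Continuous (collapse j) := by
  rw [continuous_iff_continuousAt]
  intro a
  by_cases ha : a ∈ range j
  · obtain ⟨x, rfl⟩ := ha
    rw [← hj.continuousAt_iff]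
    exact (OnePoint.continuous_coe.congr fun y => (collapse_apply hj.injective y).symm).continuousAt
  · rw [ContinuousAt, collapse_of_notMem ha, hasBasis_nhds_infty.tendsto_right_iff]
    rintro K ⟨-, hK⟩
    have hjK : (j '' K)ᶜ ∈ 𝓝 a := (hK.image hj.continuous).isClosed.isOpen_compl.mem_nhds
      fun ⟨x, _, hx⟩ => ha ⟨x, hx⟩
    filter_upwards [hjK] with b hb
    by_cases hbj : b ∈ range j
    · obtain ⟨x, rfl⟩ := hbj
      rw [collapse_apply hj.injective]
      exact Or.inl ⟨x, fun hx => hb ⟨x, hx, rfl⟩, rfl⟩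
    · exact Or.inr (collapse_of_notMem hbj)

/-- Maps out of `A` that are constant off the image of an open embedding `j : E → A` are the based
maps out of the one-point compactification of `E`. -/
def constOffRangeHomeomorph [CompactSpace A] [T2Space A] (hj : IsOpenEmbedding j)
    (hne : (range j)ᶜ.Nonempty) (y₀ : Y) :
    {f : C(A, Y) // ∀ a ∉ range j, f a = y₀} ≃ₜ BasedMaps E y₀ :=
  haveI : T2Space E := hj.isEmbedding.t2Space
  haveI : LocallyCompactSpace E := hj.locallyCompactSpace
  let q : C(A, OnePoint E) := ⟨collapse j, continuous_collapse hj⟩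
  have hq : IsProperMap q := q.continuous.isProperMap
  have hs : Surjective q := collapse_surjective hj.injective hne
  homeomorphOfRangeEq IsEmbedding.subtypeVal
    ((isEmbedding_precomp hq hs).comp IsEmbedding.subtypeVal) <| by
    ext f
    constructor
    · rintro ⟨⟨f, hf⟩, rfl⟩
      obtain ⟨g, rfl⟩ := exists_comp_eq hq hs f (factorsThrough_collapse hj.injective hf)
      obtain ⟨a, ha⟩ := hne
      exact ⟨⟨g, (congrArg g (collapse_of_notMem ha)).symm.trans (hf a ha)⟩, rfl⟩
    · rintro ⟨⟨g, hg⟩, rfl⟩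
      exact ⟨⟨g.comp q, fun a ha => (congrArg g (collapse_of_notMem ha)).trans hg⟩, rfl⟩

end Collapse

section Smash

variable {X Y : Type*}

/-- The canonical map from pairs to the smash product, for one-point compactifications: the pair
`(x, y)` goes to `∞` as soon as one of its coordinates is `∞`. -/
def smash : OnePoint X × OnePoint Y → OnePoint (X × Y) :=
  collapse (Prod.map OnePoint.some OnePoint.some)

@[simp]
theorem smash_coe_coe (x : X) (y : Y) : smash ((x : OnePoint X), (y : OnePoint Y)) = ↑(x, y) :=
  collapse_apply (j := Prod.map OnePoint.some OnePoint.some)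
    (coe_injective.prodMap coe_injective) (x, y)

@[simp]
theorem smash_infty_left (y : OnePoint Y) : smash ((∞ : OnePoint X), y) = ∞ :=
  collapse_of_notMem fun ⟨p, hp⟩ => coe_ne_infty p.1 (congrArg Prod.fst hp)

@[simp]
theorem smash_infty_right (x : OnePoint X) : smash (x, (∞ : OnePoint Y)) = ∞ :=
  collapse_of_notMem fun ⟨p, hp⟩ => coe_ne_infty p.2 (congrArg Prod.snd hp)

theorem continuous_smash [TopologicalSpace X] [TopologicalSpace Y] [T2Space X] [T2Space Y]
    [LocallyCompactSpace X] [LocallyCompactSpace Y] :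
    Continuous (smash : OnePoint X × OnePoint Y → OnePoint (X × Y)) :=
  continuous_collapse (isOpenEmbedding_coe.prodMap isOpenEmbedding_coe)

end Smash

section Action

variable {G X : Type*} [Group G] [MulAction G X]

/-- The extension of an action to the one-point compactification that fixes `∞`. -/
instance : MulAction G (OnePoint X) where
  smul g := OnePoint.map (g • ·)
  one_smul x := by
    change OnePoint.map (fun x : X => (1 : G) • x) x = x
    simp only [one_smul]
    exact congrFun OnePoint.map_id x
  mul_smul g h x := by
    change OnePoint.map (fun x : X => (g * h) • x) x = _
    simp only [mul_smul]
    exact congrFun (OnePoint.map_comp (g • · : X → X) (h • ·)) x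

theorem smul_onePoint_eq_map (g : G) (x : OnePoint X) : g • x = OnePoint.map (g • ·) x := rfl

@[simp]
theorem smul_coe (g : G) (x : X) : g • (x : OnePoint X) = ↑(g • x) := rfl

@[simp]
theorem smul_infty (g : G) : g • (∞ : OnePoint X) = ∞ := rfl

instance [TopologicalSpace G] [TopologicalSpace X] [IsTopologicalGroup G]
    [WeaklyLocallyCompactSpace G] [T2Space X] [ContinuousSMul G X] :
    ContinuousSMul G (OnePoint X) where
  continuous_smul := by
    rw [continuous_iff_continuousAt]
    rintro ⟨g, x⟩
    induction x with
    | coe x =>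
      exact (((IsOpenEmbedding.id (X := G)).prodMap isOpenEmbedding_coe).continuousAt_iff
        (x := (g, x))).1 (OnePoint.continuous_coe.comp continuous_smul).continuousAt
    | infty =>
      rw [ContinuousAt, smul_infty, hasBasis_nhds_infty.tendsto_right_iff]
      rintro K ⟨-, hK⟩
      obtain ⟨V, hV, hgV⟩ := exists_compact_mem_nhds g
      let L : Set X := (fun p : G × X => p.1⁻¹ • p.2) '' V ×ˢ K
      have hL : IsCompact L := (hV.prod hK).image (by fun_prop)
      filter_upwards [prod_mem_nhds hgV ((isOpen_compl_image_coe.2 ⟨hL.isClosed, hL⟩).mem_nhds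
        infty_notMem_image_coe)]
      rintro ⟨h, y⟩ ⟨hh, hy⟩
      induction y with
      | infty => exact Or.inr rfl
      | coe y =>
        exact Or.inl ⟨h • y,
          fun hyK => hy ⟨y, ⟨(h, h • y), ⟨hh, hyK⟩, inv_smul_smul h y⟩, rfl⟩, rfl⟩

end Action

section AxialAction

/-- Rotation of `ℂ × ℝ` about the axis `0 × ℝ`. -/
instance : MulAction Circle (ℂ × ℝ) where
  smul u p := (u • p.1, p.2)
  one_smul p := Prod.ext (one_smul _ p.1) rfl
  mul_smul u v p := Prod.ext (mul_smul u v p.1) rfl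

theorem smul_prod_real (u : Circle) (p : ℂ × ℝ) : u • p = (u • p.1, p.2) := rfl

instance : ContinuousSMul Circle (ℂ × ℝ) where
  continuous_smul := by
    simp only [smul_prod_real]
    fun_prop

end AxialAction

section Splitting

instance {X G : Type*} [TopologicalSpace X] [LocallyCompactSpace X] [TopologicalSpace G] [Group G]
    [IsTopologicalGroup G] : IsTopologicalGroup C(X, G) where
  continuous_inv := ContinuousMap.continuous_postcomp ⟨_, continuous_inv⟩

variable {Γ Δ S : Type*} [Group Γ] [TopologicalSpace Γ] [IsTopologicalGroup Γ] [Group Δ]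
  [TopologicalSpace Δ] [TopologicalSpace S]

/-- A continuous homomorphism `π` of groups splits as a product over the image of `π ∘ σ`,
whenever `σ` is a continuous family of elements such that `π ∘ σ` is an embedding. -/
def sectionSplitting (π : Γ →* Δ) (hπ : Continuous π) {σ : S → Γ} (hσ : Continuous σ)
    (he : IsEmbedding (π ∘ σ)) : {g // π g ∈ range (π ∘ σ)} ≃ₜ π.ker × S :=
  let s : {g // π g ∈ range (π ∘ σ)} → S := fun g => he.toHomeomorph.symm ⟨π g, g.2⟩
  have hs (g) : π (σ (s g)) = π g := congrArg Subtype.val (he.toHomeomorph.apply_symm_apply _)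
  have hs' : Continuous s := he.toHomeomorph.symm.continuous.comp
    ((hπ.comp continuous_subtype_val).subtype_mk _)
  have hker (k : π.ker) (t : S) : π (k * σ t) = (π ∘ σ) t := by
    rw [map_mul, k.2, one_mul, comp_apply]
  { toFun := fun g => (⟨g * (σ (s g))⁻¹, by
      rw [MonoidHom.mem_ker, map_mul, map_inv, hs, mul_inv_cancel]⟩, s g)
    invFun := fun p => ⟨p.1 * σ p.2, p.2, (hker p.1 p.2).symm⟩
    left_inv := fun g => Subtype.ext (inv_mul_cancel_right _ _)
    right_inv := fun ⟨k, t⟩ => by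
      have hst : s ⟨k * σ t, t, (hker k t).symm⟩ = t := he.injective ((hs _).trans (hker k t))
      refine Prod.ext (Subtype.ext ?_) hst
      dsimp only
      rw [hst, mul_inv_cancel_right]
    continuous_toFun := by fun_prop
    continuous_invFun := by fun_prop }

variable {A D E G : Type*} [TopologicalSpace A] [CompactSpace A] [T2Space A] [TopologicalSpace D]
  [Nonempty D] [TopologicalSpace E] [TopologicalSpace G] [Group G] [IsTopologicalGroup G]

/-- Let `c` be a family of maps `A → G` that is determined by restriction along `i : D → A`. The
maps with the same restriction as some member of the family split into that member and a map
supported on the complement of `i`, which is an open cell `j : E → A`. -/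
def restrictionSplitting (i : C(D, A)) {j : E → A} (hj : IsOpenEmbedding j)
    (hij : range j = (range i)ᶜ) {c : S → C(A, G)} (hc : Continuous c)
    (he : IsEmbedding fun s => (c s).comp i) :
    {f : C(A, G) // f.comp i ∈ range fun s => (c s).comp i} ≃ₜ BasedMaps E (1 : G) × S :=
  have hne : (range j)ᶜ.Nonempty := by
    rw [hij, compl_compl]
    exact range_nonempty i
  have hker (f : C(A, G)) :
      f ∈ (ContinuousMap.compMonoidHom' i : C(A, G) →* C(D, G)).ker ↔ ∀ a ∉ range j, f a = 1 := by
    simp only [hij, notMem_compl_iff, forall_mem_range]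
    exact DFunLike.ext_iff
  (sectionSplitting (ContinuousMap.compMonoidHom' i : C(A, G) →* C(D, G))
    (ContinuousMap.continuous_precomp i) hc he).trans <|
    (((Homeomorph.refl C(A, G)).subtype hker).trans (constOffRangeHomeomorph hj hne 1)).prodCongr
      (.refl S)

end Splitting

section Polar

/-- The closed ray of nonpositive reals in the Riemann sphere, parametrized by `[0, ∞]`. With this
choice its complement is `Complex.slitPlane`. -/
def ray : C(OnePoint ℝ≥0, OnePoint ℂ) :=
  have h : Isometry fun t : ℝ≥0 => -(t : ℂ) :=
    (IsometryEquiv.neg ℂ).isometry.comp (Complex.isometry_ofReal.comp isometry_subtype_coe)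
  ⟨OnePoint.map fun t => -(t : ℂ), OnePoint.continuous_map h.continuous <| by
    simpa only [coclosedCompact_eq_cocompact] using h.isClosedEmbedding.tendsto_cocompact⟩

/-- The modulus on the Riemann sphere, with values in `[0, ∞]`. -/
def radius : C(OnePoint ℂ, OnePoint ℝ≥0) :=
  ⟨OnePoint.map nnnorm, OnePoint.continuous_map continuous_nnnorm <| by
    rw [coclosedCompact_eq_cocompact, coclosedCompact_eq_cocompact, cocompact_eq_atTop (α := ℝ≥0)]
    exact NNReal.tendsto_coe_atTop.1 tendsto_norm_cocompact_atTop⟩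

@[simp]
theorem ray_coe (t : ℝ≥0) : ray t = ((-(t : ℂ) : ℂ) : OnePoint ℂ) := rfl

@[simp]
theorem ray_infty : ray ∞ = ∞ := rfl

theorem ray_zero : ray (0 : ℝ≥0) = (0 : ℂ) := by
  simp

@[simp]
theorem radius_coe (z : ℂ) : radius z = (‖z‖₊ : OnePoint ℝ≥0) := rfl

theorem radius_ray (r : OnePoint ℝ≥0) : radius (ray r) = r := by
  induction r with
  | infty => rfl
  | coe t => simp

theorem radius_smul (u : Circle) (x : OnePoint ℂ) : radius (u • x) = radius x := by
  induction x with
  | infty => rfl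
  | coe z =>
    have hu : ‖(u : ℂ)‖₊ = 1 := NNReal.eq u.norm_coe
    rw [smul_coe, radius_coe, radius_coe, Circle.smul_def, smul_eq_mul, nnnorm_mul, hu, one_mul]

/-- Polar coordinates on the Riemann sphere, with angles measured from the negative real axis. -/
def polar : C(OnePoint ℝ≥0 × Circle, OnePoint ℂ) :=
  ⟨fun p => p.2 • ray p.1, by fun_prop⟩

theorem polar_apply (r : OnePoint ℝ≥0) (u : Circle) : polar (r, u) = u • ray r := rfl

theorem polar_surjective : Surjective polar := by
  intro x
  induction x with
  | infty => exact ⟨(∞, 1), rfl⟩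
  | coe z =>
    refine ⟨(‖z‖₊, Circle.exp (Complex.arg (-z))), ?_⟩
    rw [polar_apply, ray_coe, smul_coe, Circle.smul_def, Circle.coe_exp, smul_eq_mul, mul_neg,
      coe_nnnorm, ← norm_neg z, mul_comm, Complex.norm_mul_exp_arg_mul_I, neg_neg]

theorem polar_eq_polar_iff {r s : OnePoint ℝ≥0} {u v : Circle} :
    polar (r, u) = polar (s, v) ↔ r = s ∧ (r = (0 : ℝ≥0) ∨ r = ∞ ∨ u = v) := by
  constructor
  · intro h
    have hr : r = s := by
      simpa only [polar_apply, radius_smul, radius_ray] using congrArg radius h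
    subst hr
    refine ⟨rfl, ?_⟩
    induction r with
    | infty => exact Or.inr (Or.inl rfl)
    | coe t =>
      simpa [polar_apply, Circle.smul_def, or_comm, Circle.coe_inj] using h
  · rintro ⟨rfl, rfl | rfl | rfl⟩ <;> simp [polar_apply]

end Polar

section Untwisting

theorem surjective_circle_pow {m : ℕ} (hm : m ≠ 0) : Surjective fun u : Circle => u ^ m := by
  intro u
  obtain ⟨t, rfl⟩ := Circle.exp_surjective u
  refine ⟨Circle.exp (t / m), ?_⟩
  dsimp only
  rw [← Circle.exp_natCast_mul, mul_div_cancel₀ t (Nat.cast_ne_zero.2 hm)]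

/-- Pointwise action of a continuous family of group elements on a mapping space. -/
def smulFamily {A G Y : Type*} [TopologicalSpace A] [LocallyCompactSpace A] [TopologicalSpace G]
    [Group G] [IsTopologicalGroup G] [TopologicalSpace Y] [MulAction G Y] [ContinuousSMul G Y]
    (a : C(A, G)) : C(A, Y) ≃ₜ C(A, Y) where
  toFun f := ⟨fun x => a x • f x, by fun_prop⟩
  invFun f := ⟨fun x => (a x)⁻¹ • f x, by fun_prop⟩
  left_inv f := ContinuousMap.ext fun x => inv_smul_smul (a x) (f x)
  right_inv f := ContinuousMap.ext fun x => smul_inv_smul (a x) (f x)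
  continuous_toFun := ContinuousMap.continuous_of_continuous_uncurry _ (by
    change Continuous fun p : C(A, Y) × A => a p.2 • p.1 p.2
    fun_prop)
  continuous_invFun := ContinuousMap.continuous_of_continuous_uncurry _ (by
    change Continuous fun p : C(A, Y) × A => (a p.2)⁻¹ • p.1 p.2
    fun_prop)

variable {Y : Type*} [TopologicalSpace Y] [MulAction Circle Y] {m : ℕ} {y₀ : Y}

/-- Based maps from the Riemann sphere to `Y` that commute with the rotations of order dividing
`m`. -/
abbrev RotationMaps (m : ℕ) (y₀ : Y) : Type _ :=
  {f : C(OnePoint ℂ, Y) // f ∞ = y₀ ∧ ∀ u : Circle, u ^ m = 1 → ∀ x, f (u • x) = u • f x}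

/-- Based maps from the Riemann sphere to `Y` that send the origin to a fixed point of the
circle. -/
abbrev FixedOriginMaps (y₀ : Y) : Type _ :=
  {h : C(OnePoint ℂ, Y) // h ∞ = y₀ ∧ h (0 : ℂ) ∈ MulAction.fixedPoints Circle Y}

/-- Polar coordinates on the orbit space of the Riemann sphere under the rotations of order
dividing `m`; the orbit space is again a Riemann sphere. -/
def powPolar (m : ℕ) : C(OnePoint ℝ≥0 × Circle, OnePoint ℂ) :=
  ⟨fun p => polar (p.1, p.2 ^ m), by fun_prop⟩

theorem powPolar_apply (r : OnePoint ℝ≥0) (u : Circle) :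
    powPolar m (r, u) = polar (r, u ^ m) := rfl

theorem polar_zero (u : Circle) : polar ((0 : ℝ≥0), u) = (0 : ℂ) := by
  rw [polar_apply, ray_zero, smul_coe, smul_zero]

theorem polar_infty (u : Circle) : polar (∞, u) = ∞ := rfl

theorem RotationMaps.factorsThrough (hy₀ : y₀ ∈ MulAction.fixedPoints Circle Y)
    (f : RotationMaps m y₀) (hf : f.1 (0 : ℂ) ∈ MulAction.fixedPoints Circle Y) :
    FactorsThrough (fun p : OnePoint ℝ≥0 × Circle => p.2⁻¹ • f.1 (polar p)) (powPolar m) := by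
  rintro ⟨r, u⟩ ⟨s, v⟩ h
  dsimp only
  obtain ⟨rfl, rfl | rfl | huv⟩ := polar_eq_polar_iff.1 h
  · rw [polar_zero, polar_zero, hf, hf]
  · rw [polar_infty, polar_infty, f.2.1, hy₀, hy₀]
  · have hζ : (u * v⁻¹) ^ m = 1 := by rw [mul_pow, inv_pow, mul_inv_eq_one]; exact huv
    have hu : polar (r, u) = (u * v⁻¹) • polar (r, v) := by
      rw [polar_apply, polar_apply, smul_smul, inv_mul_cancel_right]
    rw [hu, f.2.2 _ hζ, smul_smul, inv_mul_cancel_left]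

theorem FixedOriginMaps.factorsThrough (hy₀ : y₀ ∈ MulAction.fixedPoints Circle Y)
    (h : FixedOriginMaps y₀) :
    FactorsThrough (fun p : OnePoint ℝ≥0 × Circle => p.2 • h.1 (powPolar m p)) polar := by
  rintro ⟨r, u⟩ ⟨s, v⟩ huv
  dsimp only
  rw [powPolar_apply, powPolar_apply]
  obtain ⟨rfl, rfl | rfl | rfl⟩ := polar_eq_polar_iff.1 huv
  · rw [polar_zero, polar_zero, h.2.2, h.2.2]
  · rw [polar_infty, polar_infty, h.2.1, hy₀, hy₀]
  · rfl

theorem RotationMaps.apply_zero_mem (f : RotationMaps m y₀)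
    (hfix : ∀ y : Y, (∀ u : Circle, u ^ m = 1 → u • y = y) → y ∈ MulAction.fixedPoints Circle Y) :
    f.1 (0 : ℂ) ∈ MulAction.fixedPoints Circle Y :=
  hfix _ fun u hu => by rw [← f.2.2 u hu, smul_coe, smul_zero]

theorem powPolar_surjective (hm : m ≠ 0) : Surjective (powPolar m) :=
  polar_surjective.comp (surjective_id.prodMap (surjective_circle_pow hm))

theorem isProperMap_powPolar : IsProperMap (powPolar m) := (powPolar m).continuous.isProperMap

theorem isProperMap_polar : IsProperMap polar := polar.continuous.isProperMap

variable [ContinuousSMul Circle Y]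

theorem range_rotationMaps_eq (hm : m ≠ 0) (hy₀ : y₀ ∈ MulAction.fixedPoints Circle Y)
    (hfix : ∀ y : Y, (∀ u : Circle, u ^ m = 1 → u • y = y) → y ∈ MulAction.fixedPoints Circle Y) :
    range (fun f : RotationMaps m y₀ => f.1.comp polar) =
      range fun h : FixedOriginMaps y₀ =>
        smulFamily ContinuousMap.snd (h.1.comp (powPolar m)) := by
  ext φ
  constructor
  · rintro ⟨f, rfl⟩
    have hf := f.apply_zero_mem hfix
    obtain ⟨h, hh⟩ := exists_comp_eq isProperMap_powPolar (powPolar_surjective hm)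
      ((smulFamily ContinuousMap.snd).symm (f.1.comp polar)) (f.factorsThrough hy₀ hf)
    have h_apply (p) : h (powPolar m p) = p.2⁻¹ • f.1 (polar p) := DFunLike.congr_fun hh p
    refine ⟨⟨h, ?_, ?_⟩, (smulFamily ContinuousMap.snd).eq_symm_apply.1 hh⟩
    · simpa only [powPolar_apply, polar_infty, inv_one, one_smul, f.2.1] using h_apply (∞, 1)
    · have h0 := h_apply ((0 : ℝ≥0), 1)
      rw [inv_one, one_smul, polar_zero] at h0
      rwa [← h0, powPolar_apply, polar_zero] at hf
  · rintro ⟨h, rfl⟩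
    obtain ⟨f, hf⟩ := exists_comp_eq isProperMap_polar polar_surjective
      (smulFamily ContinuousMap.snd (h.1.comp (powPolar m))) (h.factorsThrough hy₀)
    have f_apply (p) : f (polar p) = p.2 • h.1 (powPolar m p) := DFunLike.congr_fun hf p
    refine ⟨⟨f, ?_, fun u hu => polar_surjective.forall.2 ?_⟩, hf⟩
    · simpa only [powPolar_apply, polar_infty, one_smul, h.2.1] using f_apply (∞, 1)
    · rintro ⟨r, v⟩
      have hpow : powPolar m (r, u * v) = powPolar m (r, v) := by
        rw [powPolar_apply, powPolar_apply, mul_pow, hu, one_mul]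
      have hpolar : u • polar (r, v) = polar (r, u * v) := smul_smul u v (ray r)
      rw [hpolar, f_apply, f_apply, hpow, mul_smul]

/-- The untwisting homeomorphism, `h (u ^ m • x) = u⁻¹ • f (u • x)` for `x` on the ray. -/
def untwistingHomeomorph (hm : m ≠ 0) (hy₀ : y₀ ∈ MulAction.fixedPoints Circle Y)
    (hfix : ∀ y : Y, (∀ u : Circle, u ^ m = 1 → u • y = y) → y ∈ MulAction.fixedPoints Circle Y) :
    RotationMaps m y₀ ≃ₜ FixedOriginMaps y₀ :=
  homeomorphOfRangeEq ((isEmbedding_precomp isProperMap_polar polar_surjective).comp .subtypeVal)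
    ((smulFamily ContinuousMap.snd).isEmbedding.comp
      ((isEmbedding_precomp isProperMap_powPolar (powPolar_surjective hm)).comp .subtypeVal))
    (range_rotationMaps_eq hm hy₀ hfix)

end Untwisting

section Cells

theorem isOpenEmbedding_toNNReal_exp : IsOpenEmbedding fun x => (Real.exp x).toNNReal := by
  have h : ((↑) : ℝ≥0 → ℝ) ∘ (fun x => (Real.exp x).toNNReal) = Real.exp :=
    funext fun x => Real.coe_toNNReal _ (Real.exp_pos x).le
  refine ⟨.of_comp (by fun_prop) NNReal.continuous_coe ?_, ?_⟩
  · rw [h]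
    exact Real.isOpenEmbedding_exp.isEmbedding
  · rw [← preimage_image_eq (range _) NNReal.coe_injective, ← range_comp, h]
    exact Real.isOpenEmbedding_exp.isOpen_range.preimage NNReal.continuous_coe

theorem exists_isOpenEmbedding_range_eq_compl_zero_infty {E : Type*} [AddCommGroup E] [Module ℝ E]
    [TopologicalSpace E] [IsTopologicalAddGroup E] [ContinuousSMul ℝ E] [T2Space E]
    (hE : Module.finrank ℝ E = 1) :
    ∃ j : E → OnePoint ℝ≥0, IsOpenEmbedding j ∧ range j = {((0 : ℝ≥0) : OnePoint ℝ≥0), ∞}ᶜ := by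
  have : FiniteDimensional ℝ E := FiniteDimensional.of_finrank_eq_succ hE
  let e : E ≃L[ℝ] ℝ := .ofFinrankEq (hE.trans (Module.finrank_self ℝ).symm)
  refine ⟨_, isOpenEmbedding_coe.comp (isOpenEmbedding_toNNReal_exp.comp
    e.toHomeomorph.isOpenEmbedding), ?_⟩
  rw [← comp_assoc, e.toHomeomorph.surjective.range_comp]
  ext r
  induction r with
  | infty => simp
  | coe t =>
    have h : t ∈ range (fun x => (Real.exp x).toNNReal) ↔ t ≠ 0 := by
      rw [← NNReal.coe_injective.mem_set_image, ← range_comp]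
      simp [comp_def, (Real.exp_pos _).le, pos_iff_ne_zero]
    simpa using h

/-- The exponential model of the slit plane: `(x, y)` goes to `exp (x + θ y * I)`, where `θ`
contracts the line to `(-π, π)`. -/
def planeToSlitPlane : OpenPartialHomeomorph (ℝ × ℝ) ℂ :=
  (((OpenPartialHomeomorph.refl ℝ).prod
    (OpenPartialHomeomorph.univBall (0 : ℝ) Real.pi)).transHomeomorph
      Complex.equivRealProdCLM.symm.toHomeomorph).trans' Complex.expOpenPartialHomeomorph <| by
    ext z
    simp [OpenPartialHomeomorph.univBall_target _ Real.pi_pos, Real.ball_eq_Ioo,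
      Complex.expOpenPartialHomeomorph]

theorem planeToSlitPlane_source : planeToSlitPlane.source = univ := by
  simp [planeToSlitPlane]

theorem planeToSlitPlane_target : planeToSlitPlane.target = Complex.slitPlane := rfl

theorem compl_range_ray : (range ray)ᶜ = OnePoint.some '' Complex.slitPlane := by
  ext x
  induction x with
  | infty => simpa using ⟨∞, rfl⟩
  | coe z =>
    suffices (∃ t : ℝ≥0, -(t : ℂ) = z) ↔ z ∉ Complex.slitPlane by
      simpa [OnePoint.forall] using not_congr this
    simp only [Complex.mem_slitPlane_iff, not_or, not_lt, not_not]
    constructor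
    · rintro ⟨t, rfl⟩
      simp
    · rintro ⟨hre, him⟩
      exact ⟨(-z.re).toNNReal, Complex.ext (by simp [hre]) (by simp [him])⟩

theorem exists_isOpenEmbedding_range_eq_compl_range_ray {E : Type*} [AddCommGroup E] [Module ℝ E]
    [TopologicalSpace E] [IsTopologicalAddGroup E] [ContinuousSMul ℝ E] [T2Space E]
    (hE : Module.finrank ℝ E = 2) :
    ∃ j : E → OnePoint ℂ, IsOpenEmbedding j ∧ range j = (range ray)ᶜ := by
  have : FiniteDimensional ℝ E := FiniteDimensional.of_finrank_eq_succ hE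
  let e : E ≃L[ℝ] ℝ × ℝ := .ofFinrankEq (by rw [hE, Module.finrank_prod, Module.finrank_self])
  refine ⟨_, isOpenEmbedding_coe.comp ((planeToSlitPlane.isOpenEmbedding
    planeToSlitPlane_source).comp e.toHomeomorph.isOpenEmbedding), ?_⟩
  rw [range_comp, e.toHomeomorph.surjective.range_comp, compl_range_ray, ← image_univ,
    ← planeToSlitPlane_source, planeToSlitPlane.image_source_eq_target, planeToSlitPlane_target]

end Cells

section OriginSplitting

variable {G S E : Type*} [TopologicalSpace G] [Group G] [IsTopologicalGroup G] [TopologicalSpace S]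
  [AddCommGroup E] [Module ℝ E] [TopologicalSpace E] [IsTopologicalAddGroup E] [ContinuousSMul ℝ E]
  [T2Space E]

theorem nonempty_homeomorph_basedMaps_prod_arcs (hE : Module.finrank ℝ E = 2)
    (P : C(OnePoint ℝ≥0, G) → Prop) :
    Nonempty ({f : C(OnePoint ℂ, G) // P (f.comp ray)} ≃ₜ BasedMaps E (1 : G) × {k // P k}) := by
  obtain ⟨j, hj, hrange⟩ := exists_isOpenEmbedding_range_eq_compl_range_ray hE
  let c : {k : C(OnePoint ℝ≥0, G) // P k} → C(OnePoint ℂ, G) := fun k => k.1.comp radius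
  have hc : (fun k => (c k).comp ray) = Subtype.val :=
    funext fun k => ContinuousMap.ext fun r => congrArg k.1 (radius_ray r)
  have hmem (f : C(OnePoint ℂ, G)) :
      P (f.comp ray) ↔ f.comp ray ∈ range fun k => (c k).comp ray := by
    rw [hc]
    exact ⟨fun hf => ⟨⟨_, hf⟩, rfl⟩, fun ⟨k, hk⟩ => hk ▸ k.2⟩
  exact ⟨((Homeomorph.refl C(OnePoint ℂ, G)).subtype hmem).trans (restrictionSplitting ray hj hrange
    (c := c) ((ContinuousMap.continuous_precomp radius).comp continuous_subtype_val)
    (by rw [hc]; exact .subtypeVal))⟩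

theorem nonempty_arcs_homeomorph_basedMaps_prod (hE : Module.finrank ℝ E = 1)
    {c : S → C(OnePoint ℝ≥0, G)} (hc : Continuous c) (hc_infty : ∀ s, c s ∞ = 1)
    (hc_zero : IsEmbedding fun s => c s (0 : ℝ≥0)) :
    Nonempty ({k : C(OnePoint ℝ≥0, G) // k ∞ = 1 ∧ k (0 : ℝ≥0) ∈ range fun s => c s (0 : ℝ≥0)} ≃ₜ
      BasedMaps E (1 : G) × S) := by
  obtain ⟨j, hj, hrange⟩ := exists_isOpenEmbedding_range_eq_compl_zero_infty hE
  let i : C(({((0 : ℝ≥0) : OnePoint ℝ≥0), ∞} : Set (OnePoint ℝ≥0)), OnePoint ℝ≥0) :=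
    ⟨Subtype.val, continuous_subtype_val⟩
  have hi : range j = (range i)ᶜ := by rw [hrange]; exact congrArg _ Subtype.range_val.symm
  have he : IsEmbedding fun s => (c s).comp i :=
    .of_comp ((ContinuousMap.continuous_precomp i).comp hc)
      (continuous_eval_const (⟨_, Or.inl rfl⟩ : ({_, _} : Set _))) hc_zero
  have hmem (k : C(OnePoint ℝ≥0, G)) : (k ∞ = 1 ∧ k (0 : ℝ≥0) ∈ range fun s => c s (0 : ℝ≥0)) ↔
      k.comp i ∈ range fun s => (c s).comp i := by
    constructor
    · rintro ⟨hk, s, hs⟩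
      refine ⟨s, ContinuousMap.ext ?_⟩
      rintro ⟨_, rfl | rfl⟩
      exacts [hs, (hc_infty s).trans hk.symm]
    · rintro ⟨s, hs⟩
      exact ⟨(DFunLike.congr_fun hs ⟨_, Or.inr rfl⟩).symm.trans (hc_infty s), s,
        DFunLike.congr_fun hs ⟨_, Or.inl rfl⟩⟩
  exact ⟨((Homeomorph.refl C(OnePoint ℝ≥0, G)).subtype hmem).trans
    (restrictionSplitting i hj hi hc he)⟩

end OriginSplitting

section Axis

/-- The axis of rotation in the one-point compactification of `ℂ × ℝ`. -/
def axis (s : OnePoint ℝ) : OnePoint (ℂ × ℝ) :=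
  smash ((0 : ℂ), s)

/-- The half great circle from the point `s` of the axis to `∞`. -/
def meridian : C(OnePoint ℝ, C(OnePoint ℝ≥0, OnePoint (ℂ × ℝ))) :=
  ContinuousMap.curry ⟨fun p => smash (ray p.2, p.1), continuous_smash.comp (by fun_prop)⟩

theorem meridian_zero (s : OnePoint ℝ) : meridian s (0 : ℝ≥0) = axis s := by
  simp [meridian, axis]

theorem meridian_infty (s : OnePoint ℝ) : meridian s ∞ = ∞ := smash_infty_left s

theorem isEmbedding_axis : IsEmbedding axis := by
  have hcont : Continuous axis := continuous_smash.comp (by fun_prop)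
  refine (hcont.isClosedEmbedding fun s t h => ?_).isEmbedding
  induction s <;> induction t <;> simp_all [axis]

theorem axis_mem_fixedPoints (s : OnePoint ℝ) :
    axis s ∈ MulAction.fixedPoints Circle (OnePoint (ℂ × ℝ)) := by
  intro u
  induction s with
  | infty => simp [axis]
  | coe s => simp [axis, smul_prod_real]

theorem mem_range_axis_of_smul_eq {u : Circle} (hu : u ≠ 1) {y : OnePoint (ℂ × ℝ)}
    (h : u • y = y) : y ∈ range axis := by
  induction y with
  | infty => exact ⟨∞, smash_infty_right _⟩
  | coe p =>
    obtain ⟨z, s⟩ := p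
    have hz : (u : ℂ) * z = z := by
      simpa [smul_prod_real, Circle.smul_def] using h
    have hz0 : z = 0 := by
      by_contra hne
      exact hu (Circle.ext ((mul_eq_right₀ hne).1 hz))
    exact ⟨s, by rw [axis, smash_coe_coe, hz0]⟩

theorem fixedPoints_eq_range_axis :
    MulAction.fixedPoints Circle (OnePoint (ℂ × ℝ)) = range axis := by
  refine Subset.antisymm (fun y hy => ?_) (range_subset_iff.2 axis_mem_fixedPoints)
  exact mem_range_axis_of_smul_eq Circle.exp_pi_ne_one (hy _)

end Axis

section UnitQuaternions

theorem exists_homeomorph_unit_quaternions {V : Type*} [AddCommGroup V] [Module ℝ V]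
    [TopologicalSpace V] [IsTopologicalAddGroup V] [ContinuousSMul ℝ V] [T2Space V]
    (hV : Module.finrank ℝ V = 3) :
    ∃ Φ : OnePoint V ≃ₜ Metric.sphere (0 : Quaternion ℝ) 1, Φ ∞ = 1 := by
  have : FiniteDimensional ℝ V := FiniteDimensional.of_finrank_eq_succ hV
  have : Fact (Module.finrank ℝ (Quaternion ℝ) = 3 + 1) := ⟨Quaternion.finrank_eq_four⟩
  let e : V ≃L[ℝ] (Submodule.span ℝ {(1 : Quaternion ℝ)})ᗮ :=
    .ofFinrankEq (hV.trans (Submodule.finrank_orthogonal_span_singleton one_ne_zero).symm)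
  let Θ : OnePoint V ≃ₜ Metric.sphere (0 : Quaternion ℝ) 1 :=
    e.toHomeomorph.onePointCongr.trans (onePointHyperplaneHomeoUnitSphere norm_one)
  exact ⟨Θ.trans (Homeomorph.mulLeft (Θ ∞)⁻¹), inv_mul_cancel _⟩

end UnitQuaternions

section CyclicGroup

variable {m : ℕ} [NeZero m]

theorem exists_toCircle_eq_iff {u : Circle} :
    (∃ k : ZMod m, ZMod.toCircle k = u) ↔ u ^ m = 1 := by
  constructor
  · rintro ⟨k, rfl⟩
    rw [← AddChar.map_nsmul_eq_pow, nsmul_eq_mul, ZMod.natCast_self, zero_mul,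
      AddChar.map_zero_eq_one]
  · intro hu
    obtain ⟨k, hk⟩ := (bijective_rootsOfUnityAddChar m).surjective (rootsOfUnity.mkOfPowEq u hu)
    have hk' := congrArg (fun ζ : rootsOfUnity m Circle => ((ζ : Circleˣ) : Circle)) hk
    exact ⟨k, by simpa using hk'⟩

theorem rotAct_eq_smul (k : ZMod m) (z : ℂ) : rotAct m k z = ZMod.toCircle k • z := by
  rw [rotAct, Circle.smul_def, ZMod.toCircle_apply, smul_eq_mul]

theorem equivariant_iff_commutes_with_rotations (f : C(OnePoint ℂ, OnePoint (ℂ × ℝ))) :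
    (∀ (k : ZMod m) (x : OnePoint ℂ), f (OnePoint.map (rotAct m k) x) =
      OnePoint.map (fun p => (rotAct m k p.1, p.2)) (f x)) ↔
    ∀ u : Circle, u ^ m = 1 → ∀ x, f (u • x) = u • f x := by
  simp only [← exists_toCircle_eq_iff, forall_exists_index, forall_apply_eq_imp_iff,
    smul_onePoint_eq_map, smul_prod_real, funext (rotAct_eq_smul _), rotAct_eq_smul]

theorem mem_fixedPoints_of_forall_pow_eq_one {m : ℕ} (hm : 2 ≤ m) {y : OnePoint (ℂ × ℝ)}
    (hy : ∀ u : Circle, u ^ m = 1 → u • y = y) :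
    y ∈ MulAction.fixedPoints Circle (OnePoint (ℂ × ℝ)) := by
  have : NeZero m := ⟨by lia⟩
  have : Fact (1 < m) := ⟨hm⟩
  have h1 : (ZMod.toCircle (1 : ZMod m)) ≠ 1 := by
    rw [← AddChar.map_zero_eq_one (ZMod.toCircle (N := m))]
    exact ZMod.injective_toCircle.ne one_ne_zero
  rw [fixedPoints_eq_range_axis]
  exact mem_range_axis_of_smul_eq h1 (hy _ (exists_toCircle_eq_iff.1 ⟨(1 : ZMod m), rfl⟩))

end CyclicGroup

section FixedOrigin

theorem nonempty_fixedOriginMaps_homeomorph {G E₁ E₂ : Type*} [TopologicalSpace G] [Group G]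
    [IsTopologicalGroup G] [AddCommGroup E₁] [Module ℝ E₁] [TopologicalSpace E₁]
    [IsTopologicalAddGroup E₁] [ContinuousSMul ℝ E₁] [T2Space E₁] [AddCommGroup E₂] [Module ℝ E₂]
    [TopologicalSpace E₂] [IsTopologicalAddGroup E₂] [ContinuousSMul ℝ E₂] [T2Space E₂]
    (hE₁ : Module.finrank ℝ E₁ = 1) (hE₂ : Module.finrank ℝ E₂ = 2)
    (Φ : OnePoint (ℂ × ℝ) ≃ₜ G) (hΦ : Φ ∞ = 1) :
    Nonempty (FixedOriginMaps (∞ : OnePoint (ℂ × ℝ)) ≃ₜ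
      BasedMaps E₁ (1 : G) × OnePoint ℝ × BasedMaps E₂ (1 : G)) := by
  let c : OnePoint ℝ → C(OnePoint ℝ≥0, G) := fun s => (Φ : C(OnePoint (ℂ × ℝ), G)).comp (meridian s)
  have hc_zero : (fun s => c s (0 : ℝ≥0)) = Φ ∘ axis :=
    funext fun s => congrArg Φ (meridian_zero s)
  have hmem (f : C(OnePoint ℂ, OnePoint (ℂ × ℝ))) :
      (f ∞ = ∞ ∧ f (0 : ℂ) ∈ MulAction.fixedPoints Circle (OnePoint (ℂ × ℝ))) ↔
        ((Homeomorph.refl (OnePoint ℂ)).arrowCongr Φ f).comp ray ∈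
          {k : C(OnePoint ℝ≥0, G) | k ∞ = 1 ∧ k (0 : ℝ≥0) ∈ range fun s => c s (0 : ℝ≥0)} := by
    rw [hc_zero, range_comp, fixedPoints_eq_range_axis]
    change _ ↔ Φ (f ∞) = 1 ∧ Φ (f (ray (0 : ℝ≥0))) ∈ Φ '' range axis
    rw [ray_zero, Φ.injective.mem_set_image, ← hΦ, Φ.injective.eq_iff]
  obtain ⟨arcs⟩ := nonempty_arcs_homeomorph_basedMaps_prod hE₁
    ((Φ : C(OnePoint (ℂ × ℝ), G)).continuous_postcomp.comp meridian.continuous : Continuous c)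
    (fun s => (congrArg Φ (meridian_infty s)).trans hΦ)
    (hc_zero ▸ Φ.isEmbedding.comp isEmbedding_axis)
  obtain ⟨discs⟩ := nonempty_homeomorph_basedMaps_prod_arcs (G := G) hE₂ _
  exact ⟨((((Homeomorph.refl (OnePoint ℂ)).arrowCongr Φ).subtype hmem).trans discs).trans <|
    (Homeomorph.prodComm _ _).trans <|
      (arcs.prodCongr (.refl _)).trans (Homeomorph.prodAssoc _ _ _)⟩

end FixedOrigin

end CyclicRotation

open CyclicRotation OnePoint in
theorem equivariant_maps_cyclic_rotation_htpyEquiv_general (m : ℕ) (hm : 2 ≤ m) :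
    Nonempty (
      {f : C(OnePoint ℂ, OnePoint (ℂ × ℝ)) //
        f OnePoint.infty = OnePoint.infty ∧
        ∀ (k : ZMod m) (x : OnePoint ℂ),
          f (OnePoint.map (rotAct m k) x) =
            OnePoint.map (fun p => (rotAct m k p.1, p.2)) (f x)} ≃ₜ
      BasedSphereMaps 1 3 × OnePoint ℝ × BasedSphereMaps 2 3) := by
  have : NeZero m := ⟨by lia⟩
  obtain ⟨Φ, hΦ⟩ := exists_homeomorph_unit_quaternions (V := ℂ × ℝ)
    (by simp [Complex.finrank_real_complex])
  obtain ⟨Ψ, hΨ⟩ := exists_homeomorph_unit_quaternions (V := EuclideanSpace ℝ (Fin 3)) (by simp)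
  obtain ⟨splitting⟩ := nonempty_fixedOriginMaps_homeomorph
    (E₁ := EuclideanSpace ℝ (Fin 1)) (E₂ := EuclideanSpace ℝ (Fin 2)) (by simp) (by simp) Φ hΦ
  let untwisting : RotationMaps m (∞ : OnePoint (ℂ × ℝ)) ≃ₜ FixedOriginMaps ∞ :=
    untwistingHomeomorph (NeZero.ne m) (fun u => smul_infty u)
      fun _ => mem_fixedPoints_of_forall_pow_eq_one hm
  refine ⟨Homeomorph.trans ?_ <| untwisting.trans <| splitting.trans <|
    (basedMapsCongr Ψ hΨ).symm.prodCongr ((Homeomorph.refl _).prodCongr (basedMapsCongr Ψ hΨ).symm)⟩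
  exact (Homeomorph.refl C(OnePoint ℂ, OnePoint (ℂ × ℝ))).subtype
    fun f => and_congr_right' (equivariant_iff_commutes_with_rotations f)

theorem equivariant_maps_cyclic_rotation_htpyEquiv (m : ℕ) (hm : 2 ≤ m) :
    Nonempty (ContinuousMap.HomotopyEquiv
      {f : C(OnePoint ℂ, OnePoint (ℂ × ℝ)) //
        f OnePoint.infty = OnePoint.infty ∧
        ∀ (k : ZMod m) (x : OnePoint ℂ),
          f (OnePoint.map (rotAct m k) x) =
            OnePoint.map (fun p => (rotAct m k p.1, p.2)) (f x)}
      (BasedSphereMaps 1 3 × OnePoint ℝ × BasedSphereMaps 2 3)) :=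
  (equivariant_maps_cyclic_rotation_htpyEquiv_general m hm).map Homeomorph.toHomotopyEquiv

end
end

section
/- Let n ≥ 2, set m = 2^(n-1), and let the dihedral group DihedralGroup m (of order 2^n) act faithfully on ℂ by the standard dihedral action, in which the rotation r k acts by multiplication by exp(2πik/m) and the reflection sr k acts by the composition of complex conjugation with a rotation (with the sign convention making this a left action); let it act on ℂ × ℝ via this action on ℂ and trivially on ℝ, and on the one-point compactifications OnePoint ℂ and OnePoint (ℂ × ℝ) by the induced actions fixing ∞ (based at ∞). Then the space Map^{DihedralGroup m}_*(OnePoint ℂ, OnePoint (ℂ × ℝ)) of equivariant basepoint-preserving continuous maps is homotopy equivalent to Map_*(S¹, S²) × Map_*(S¹, S²) × OnePoint ℝ × Map_*(S², S³), i.e. to Ω S² × Ω S² × S¹ × Ω² S³. -/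
/-!
STATEMENT 3: For `n ≥ 2` and `m = 2^(n-1)`, with the dihedral group
`DihedralGroup m` (of order `2^n`) acting faithfully on `ℂ` by the standard
dihedral action (rotations `r k` act by multiplication by `exp(2πik/m)` and
reflections `sr k` act by a rotation composed with complex conjugation, with
the sign convention making this a left action), the space of equivariant based
maps `Map^{DihedralGroup m}_*(OnePoint ℂ, OnePoint (ℂ × ℝ))` is homotopy
equivalent to `Ω S² × Ω S² × S¹ × Ω² S³`.
-/

noncomputable section

/-- The standard dihedral action of `DihedralGroup m` on `ℂ`: the rotation
`r k` acts by multiplication by `exp(2πik/m)`, and the reflection `sr k` acts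
by complex conjugation composed with such a rotation (here `sr k` sends `z` to
`conj (exp(2πik/m) * z) = exp(-2πik/m) * conj z`, the sign convention making
this a left action). -/
def dihedralAct (m : ℕ) : DihedralGroup m → ℂ → ℂ
  | DihedralGroup.r k => fun z => Complex.exp (2 * Real.pi * Complex.I * (k.val : ℂ) / (m : ℂ)) * z
  | DihedralGroup.sr k => fun z =>
      (starRingEnd ℂ) (Complex.exp (2 * Real.pi * Complex.I * (k.val : ℂ) / (m : ℂ)) * z)

/-!
An equivariant based map out of the compactified plane is the same as a map out of a compactified
plane sector of angle `π / m` which sends the bounding rays into the fixed sets `S₁` and `S₂` of two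
reflections generating the dihedral group. These fixed sets are spheres in the target sphere `S`,
meeting in a smaller sphere. Their union misses a point `p`, and translations of the vector space
`S ∖ {p}`, which extend to `S` by fixing `p`, move the basepoint to any given point of `S₁ ∪ S₂`,
with the translation vector depending continuously on that point. Joining the translation vectors
for the two bounding rays by line segments, one extends the rays to the whole sector in a continuous
way, and translating back turns sector maps with these bounding rays into twofold loops in `S`.
Translations of `S₁` and of `S₂` likewise turn a pair of rays with common origin
`b ∈ S₁ ∩ S₂` into `b` together with a loop in `S₁` and a loop in `S₂`.
-/

open Set Filter Topology
open scoped unitInterval OnePoint Pointwise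

section OnePointAction

variable {G X : Type*} [Group G] [MulAction G X]

/-- The action on the one-point compactification fixing the added point. -/
@[to_additive]
instance compactificationMulAction : MulAction G (OnePoint X) where
  smul g := OnePoint.map (g • ·)
  one_smul := OnePoint.rec rfl fun x => congrArg OnePoint.some (one_smul G x)
  mul_smul g h := OnePoint.rec rfl fun x => congrArg OnePoint.some (mul_smul g h x)

@[to_additive]
theorem smul_compactification_infty (g : G) :
    g • (∞ : OnePoint X) = ∞ := rfl

@[to_additive]
theorem smul_compactification_coe (g : G) (x : X) :
    g • (x : OnePoint X) = ((g • x : X) : OnePoint X) := rfl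

variable [TopologicalSpace X]

@[to_additive]
instance compactificationContinuousConstSMul [ContinuousConstSMul G X] :
    ContinuousConstSMul G (OnePoint X) where
  continuous_const_smul g := (Homeomorph.smul g).onePointCongr.continuous

variable [TopologicalSpace G] [IsTopologicalGroup G] [LocallyCompactSpace G] [T2Space X]
  [ContinuousSMul G X]

@[to_additive]
theorem continuousAt_smul_infty (g : G) :
    ContinuousAt (fun q : G × OnePoint X => q.1 • q.2) (g, ∞) := by
  refine OnePoint.le_nhds_infty.2 fun K _ hK => ?_
  obtain ⟨C, hC, hCg⟩ := exists_compact_mem_nhds g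
  have hK' : IsCompact (C⁻¹ • K) := hC.inv.smul_set hK
  have hinfty : (((↑) '' (C⁻¹ • K) : Set (OnePoint X))ᶜ) ∈ 𝓝 (∞ : OnePoint X) :=
    (OnePoint.isOpen_compl_image_coe.2 ⟨hK'.isClosed, hK'⟩).mem_nhds
      OnePoint.infty_notMem_image_coe
  refine mem_map.2 (mem_of_superset (prod_mem_nhds hCg hinfty) ?_)
  rw [← OnePoint.compl_image_coe]
  rintro ⟨h, p⟩ ⟨hh, hp⟩ ⟨y, hy, hyp⟩
  refine hp ⟨h⁻¹ • y, smul_mem_smul (Set.inv_mem_inv.2 hh) hy, ?_⟩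
  rw [← smul_compactification_coe, hyp]
  exact inv_smul_smul h p

@[to_additive]
instance compactificationContinuousSMul : ContinuousSMul G (OnePoint X) where
  continuous_smul := by
    refine continuous_iff_continuousAt.2 ?_
    rintro ⟨g, p⟩
    induction p using OnePoint.rec with
    | infty => exact continuousAt_smul_infty g
    | coe x =>
      have hcoe : IsOpenEmbedding (Prod.map id (↑) : G × X → G × OnePoint X) :=
        IsOpenEmbedding.id.prodMap OnePoint.isOpenEmbedding_coe
      refine (hcoe.continuousAt_iff (x := (g, x))).1 ?_
      exact (OnePoint.continuous_coe.comp continuous_smul).continuousAt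

end OnePointAction

section Translation

theorem exists_continuousMap_coe_eq {D Y : Type*} [TopologicalSpace D] [TopologicalSpace Y]
    (f : C(D, OnePoint Y)) (hf : ∀ x, f x ≠ ∞) :
    ∃ c : C(D, Y), ∀ x, (c x : OnePoint Y) = f x := by
  choose c hc using fun x => OnePoint.ne_infty_iff_exists.1 (hf x)
  refine ⟨⟨c, OnePoint.isOpenEmbedding_coe.isInducing.continuous_iff.2 ?_⟩, hc⟩
  exact f.continuous.congr fun x => (hc x).symm

variable {E : Type*} [NormedAddCommGroup E] [NormedSpace ℝ E] [FiniteDimensional ℝ E]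

theorem exists_homeomorph_onePoint_apply_eq_infty (p : OnePoint E) :
    ∃ e : OnePoint E ≃ₜ OnePoint E, e p = ∞ := by
  let V := EuclideanSpace ℝ (Fin (Module.finrank ℝ E + 1))
  let toSphere : OnePoint E ≃ₜ Metric.sphere (0 : V) 1 := onePointEquivSphereOfFinrankEq (by simp)
  let v : V := toSphere p
  have hv : ‖v‖ = 1 := norm_eq_of_mem_sphere _
  obtain ⟨L⟩ : Nonempty ((ℝ ∙ v)ᗮ ≃L[ℝ] E) :=
    haveI : Fact (Module.finrank ℝ V = Module.finrank ℝ E + 1) := ⟨finrank_euclideanSpace_fin⟩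
    FiniteDimensional.nonempty_continuousLinearEquiv_of_finrank_eq
      (Submodule.finrank_orthogonal_span_singleton (norm_ne_zero_iff.1 (hv ▸ one_ne_zero)))
  let toSphere' : OnePoint (ℝ ∙ v)ᗮ ≃ₜ Metric.sphere (0 : V) 1 :=
    onePointHyperplaneHomeoUnitSphere hv
  have hinfty : toSphere'.symm (toSphere p) = ∞ := toSphere'.symm_apply_eq.2 rfl
  refine ⟨(toSphere.trans toSphere'.symm).trans L.toHomeomorph.onePointCongr, ?_⟩
  exact congrArg L.toHomeomorph.onePointCongr hinfty

theorem exists_continuousVAdd_of_ne_univ {X : Type*} [TopologicalSpace X] (e : X ≃ₜ OnePoint E)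
    {S : Set X} (hS : S ≠ univ) {x₀ : X} (hx₀ : x₀ ∈ S) :
    ∃ (_ : AddAction E X) (_ : ContinuousVAdd E X) (c : C(S, E)), ∀ x : S, c x +ᵥ x₀ = x := by
  obtain ⟨v, hv⟩ := (ne_univ_iff_exists_notMem S).1 hS
  obtain ⟨e', he'⟩ := exists_homeomorph_onePoint_apply_eq_infty (e v)
  let φ : X ≃ₜ OnePoint E := e.trans e'
  obtain ⟨coord, hcoord⟩ := exists_continuousMap_coe_eq
    (⟨φ ∘ (↑), φ.continuous.comp continuous_subtype_val⟩ : C(S, OnePoint E))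
    fun x hx => hv (φ.injective (hx.trans he'.symm) ▸ x.2)
  let _ : AddAction E X := φ.toEquiv.addAction E
  refine ⟨inferInstance, ⟨?_⟩, coord - .const S (coord ⟨x₀, hx₀⟩),
    fun x => φ.injective ?_⟩
  · exact φ.symm.continuous.comp (continuous_fst.vadd (φ.continuous.comp continuous_snd))
  · change φ (φ.symm ((coord x - coord ⟨x₀, hx₀⟩) +ᵥ φ x₀)) = φ x
    have h₀ : (coord ⟨x₀, hx₀⟩ : OnePoint E) = φ x₀ := hcoord _
    rw [φ.apply_symm_apply, ← h₀, vadd_compactification_coe, vadd_eq_add, sub_add_cancel]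
    exact hcoord x

end Translation

section MappingSpaces

variable {D G X : Type*} [TopologicalSpace D] [TopologicalSpace X] [AddGroup G]
  [TopologicalSpace G] [IsTopologicalAddGroup G] [AddAction G X] [ContinuousVAdd G X]

/-- Pointwise translation of maps. -/
instance continuousMapAddAction : AddAction C(D, G) C(D, X) where
  vadd w f := ⟨fun x => w x +ᵥ f x, by fun_prop⟩
  zero_vadd f := ContinuousMap.ext fun x => zero_vadd G (f x)
  add_vadd w w' f := ContinuousMap.ext fun x => add_vadd (w x) (w' x) (f x)

theorem continuousMap_vadd_apply (w : C(D, G)) (f : C(D, X)) (x : D) :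
    (w +ᵥ f) x = w x +ᵥ f x := rfl

instance continuousMapContinuousVAdd [LocallyCompactSpace D] :
    ContinuousVAdd C(D, G) C(D, X) where
  continuous_vadd := ContinuousMap.continuous_of_continuous_uncurry _ (by
    change Continuous fun p : (C(D, G) × C(D, X)) × D => p.1.1 p.2 +ᵥ p.1.2 p.2
    fun_prop)

/-- A homeomorphism splitting off a parameter `φ v : A` from the points `v` of a subspace of `V`:
the points with parameter `a` are moved by `(T a).symm` onto the subspace given by `q`. -/
def shearHomeomorph {A V : Type*} [TopologicalSpace A] [TopologicalSpace V] {p q : V → Prop}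
    (φ : C({v // p v}, A)) (T : A → V ≃ₜ V) (hT : Continuous fun x : A × V => T x.1 x.2)
    (hT' : Continuous fun x : A × V => (T x.1).symm x.2)
    (h : ∀ a v, (∃ hv : p (T a v), φ ⟨T a v, hv⟩ = a) ↔ q v) :
    {v // p v} ≃ₜ A × {v // q v} where
  toFun v := (φ v, ⟨(T (φ v)).symm v, (h _ _).1
    ⟨((T (φ v)).apply_symm_apply v).symm ▸ v.2, by simp only [Homeomorph.apply_symm_apply]⟩⟩)
  invFun x := ⟨T x.1 x.2, ((h x.1 x.2).2 x.2.2).1⟩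
  left_inv v := Subtype.ext ((T (φ v)).apply_symm_apply v)
  right_inv x := by
    obtain ⟨_, hφ⟩ := (h x.1 x.2).2 x.2.2
    refine Prod.ext hφ (Subtype.ext ?_)
    simp only [hφ, Homeomorph.symm_apply_apply]
  continuous_toFun := φ.continuous.prodMk
    ((hT'.comp (φ.continuous.prodMk continuous_subtype_val)).subtype_mk _)
  continuous_invFun := by fun_prop

end MappingSpaces

section JointlySurjective

variable {ι K L Z : Type*} [Finite ι] [TopologicalSpace K] [CompactSpace K] [TopologicalSpace L]
  [T2Space L] [TopologicalSpace Z] {Q : ι → C(K, L)}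

theorem continuous_of_forall_comp (hQ : ∀ l, ∃ i x, Q i x = l) {f : L → Z}
    (hf : ∀ i, Continuous (f ∘ Q i)) : Continuous f := by
  refine continuous_iff_isClosed.2 fun C hC => ?_
  have hpreimage : f ⁻¹' C = ⋃ i, Q i '' (f ∘ Q i ⁻¹' C) := by
    ext l
    refine ⟨fun hl => ?_, ?_⟩
    · obtain ⟨i, x, rfl⟩ := hQ l
      exact mem_iUnion.2 ⟨i, x, hl, rfl⟩
    · rintro ⟨_, ⟨i, rfl⟩, x, hx, rfl⟩
      exact hx
  rw [hpreimage]
  exact isClosed_iUnion_of_finite fun i =>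
    (((hC.preimage (hf i)).isCompact).image (Q i).continuous).isClosed

theorem isEmbedding_forall_comp (hQ : ∀ l, ∃ i x, Q i x = l) :
    IsEmbedding fun (f : C(L, Z)) i => f.comp (Q i) := by
  refine ⟨⟨le_antisymm ?_ ?_⟩, fun f f' h => ContinuousMap.ext fun l => ?_⟩
  · exact (continuous_pi fun i => ContinuousMap.continuous_precomp (Q i)).le_induced
  · rw [ContinuousMap.compactOpen_eq (X := L)]
    refine le_generateFrom ?_
    rintro _ ⟨A, hA, U, hU, rfl⟩
    have hopen (i : ι) : IsOpen {h : ι → C(K, Z) | MapsTo (h i) (Q i ⁻¹' A) U} :=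
      (ContinuousMap.isOpen_setOfPred_mapsTo
        (hA.isClosed.preimage (Q i).continuous).isCompact hU).preimage
          (f := fun h : ι → C(K, Z) => h i) (continuous_apply i)
    refine ⟨⋂ i, {h | MapsTo (h i) (Q i ⁻¹' A) U}, isOpen_iInter_of_finite hopen, ?_⟩
    ext f
    refine ⟨fun h l hl => ?_, fun h => mem_iInter.2 fun i x hx => h hx⟩
    obtain ⟨i, x, rfl⟩ := hQ l
    exact mem_iInter.1 h i hl
  · obtain ⟨i, x, rfl⟩ := hQ l
    exact DFunLike.congr_fun (congrFun h i) x

end JointlySurjective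

/-- A homeomorphism onto a subspace described by a predicate, from an embedding with that range. -/
def homeomorphSubtypeOfIsEmbedding {K L : Type*} [TopologicalSpace K] [TopologicalSpace L]
    {p : L → Prop} {f : K → L} (hf : IsEmbedding f) (h : ∀ y, (∃ x, f x = y) ↔ p y) :
    K ≃ₜ {y // p y} :=
  hf.toHomeomorph.trans (Homeomorph.setCongr (Set.ext h))

section Collapse

variable {K Y Z : Type*} [TopologicalSpace K] [T2Space K] [TopologicalSpace Y]
  [TopologicalSpace Z] {e : Y → K}

/-- The Pontryagin–Thom collapse of `K` onto the one-point compactification of an open subspace,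
given by an open embedding `e`. -/
def thomCollapse (he : IsOpenEmbedding e) : C(K, OnePoint Y) where
  toFun := Function.extend e (↑) fun _ => ∞
  continuous_toFun := by
    refine continuous_iff_continuousAt.2 fun x => ?_
    by_cases hx : x ∈ range e
    · obtain ⟨y, rfl⟩ := hx
      refine he.continuousAt_iff.1 ?_
      rw [Function.extend_comp he.injective]
      exact OnePoint.continuous_coe.continuousAt
    · rw [ContinuousAt, Function.extend_apply' _ _ _ hx]
      refine OnePoint.le_nhds_infty.2 fun C _ hC => ?_
      have hmem : (e '' C)ᶜ ∈ 𝓝 x :=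
        (hC.image he.continuous).isClosed.isOpen_compl.mem_nhds fun h =>
          hx (image_subset_range _ _ h)
      refine mem_map.2 (mem_of_superset hmem fun z hz => ?_)
      by_cases hze : z ∈ range e
      · obtain ⟨y, rfl⟩ := hze
        rw [mem_preimage, he.injective.extend_apply]
        exact Or.inl ⟨y, fun h => hz ⟨y, h, rfl⟩, rfl⟩
      · rw [mem_preimage, Function.extend_apply' _ _ _ hze]
        exact Or.inr rfl

theorem thomCollapse_apply (he : IsOpenEmbedding e) (y : Y) : thomCollapse he (e y) = y :=
  he.injective.extend_apply (g := ((↑) : Y → OnePoint Y)) (e' := fun _ => ∞) y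

theorem thomCollapse_of_notMem_range (he : IsOpenEmbedding e) {x : K} (hx : x ∉ range e) :
    thomCollapse he x = ∞ :=
  Function.extend_apply' (g := ((↑) : Y → OnePoint Y)) (e' := fun _ => ∞) x hx

theorem thomCollapse_surjective (he : IsOpenEmbedding e) (hne : (range e)ᶜ.Nonempty) :
    Function.Surjective (thomCollapse he) :=
  OnePoint.rec (hne.imp fun _ hx => thomCollapse_of_notMem_range he hx)
    fun y => ⟨e y, thomCollapse_apply he y⟩

/-- Maps from `K` to `Z` sending the subset `P` to the point `z`. -/
abbrev MapsConstOn (P : Set K) (z : Z) : Type _ := {f : C(K, Z) // ∀ x ∈ P, f x = z}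

variable [CompactSpace K] [T2Space Y] [WeaklyLocallyCompactSpace Y]

theorem exists_comp_thomCollapse_eq (he : IsOpenEmbedding e) (hne : (range e)ᶜ.Nonempty) {z : Z}
    {f : C(K, Z)} (hf : ∀ x ∉ range e, f x = z) :
    ∃ g : C(OnePoint Y, Z), g ∞ = z ∧ g.comp (thomCollapse he) = f := by
  let g : OnePoint Y → Z := fun p => p.elim z (f ∘ e)
  have hg : g ∘ thomCollapse he = f := by
    funext x
    by_cases hx : x ∈ range e
    · obtain ⟨y, rfl⟩ := hx
      rw [Function.comp_apply, thomCollapse_apply]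
      rfl
    · rw [Function.comp_apply, thomCollapse_of_notMem_range he hx]
      exact (hf x hx).symm
  have hgc : Continuous g :=
    continuous_of_forall_comp (Q := fun _ : Unit => thomCollapse he)
      (fun p => ⟨(), thomCollapse_surjective he hne p⟩) fun _ => hg ▸ f.continuous
  exact ⟨⟨g, hgc⟩, rfl, ContinuousMap.ext fun x => congrFun hg x⟩

theorem isEmbedding_comp_thomCollapse (he : IsOpenEmbedding e) (hne : (range e)ᶜ.Nonempty) :
    IsEmbedding fun f : C(OnePoint Y, Z) => f.comp (thomCollapse he) :=
  (Homeomorph.funUnique Unit C(K, Z)).isEmbedding.comp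
    (isEmbedding_forall_comp (Q := fun _ : Unit => thomCollapse he)
      fun p => ⟨(), thomCollapse_surjective he hne p⟩)

/-- Based maps out of the one-point compactification of an open subspace of `K` are the maps out
of `K` which are constant off that subspace. -/
def basedMapsHomeomorphMapsConstOn (he : IsOpenEmbedding e) {P : Set K} (hP : (range e)ᶜ = P)
    (hne : P.Nonempty) (z : Z) : {f : C(OnePoint Y, Z) // f ∞ = z} ≃ₜ MapsConstOn P z :=
  homeomorphSubtypeOfIsEmbedding
    ((isEmbedding_comp_thomCollapse he (hP ▸ hne)).comp IsEmbedding.subtypeVal) fun f => by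
      subst hP
      refine ⟨?_, fun hf => ?_⟩
      · rintro ⟨g, rfl⟩ x hx
        exact (congrArg g.1 (thomCollapse_of_notMem_range he hx)).trans g.2
      · obtain ⟨g, hg, rfl⟩ := exists_comp_thomCollapse_eq he hne hf
        exact ⟨⟨g, hg⟩, rfl⟩

end Collapse

section LoopsAndSquares

variable {Z : Type*} [TopologicalSpace Z] (z : Z)

/-- Loops in `Z` based at `z`, parametrized by the unit interval. -/
abbrev UnitLoops : Type _ := MapsConstOn ({0, 1} : Set I) z

/-- The boundary of the unit square. -/
abbrev squareBoundary : Set (I × I) := {x | x.1 = 0 ∨ x.1 = 1 ∨ x.2 = 0 ∨ x.2 = 1}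

/-- Twofold loops in `Z` based at `z`, parametrized by the unit square. -/
abbrev UnitSquares : Type _ := MapsConstOn squareBoundary z

theorem isOpenEmbedding_sigmoid : IsOpenEmbedding unitInterval.sigmoid :=
  ⟨isEmbedding_sigmoid, unitInterval.range_sigmoid ▸ isOpen_Ioo⟩

theorem mem_range_sigmoid {x : I} : x ∈ range unitInterval.sigmoid ↔ x ≠ 0 ∧ x ≠ 1 := by
  rw [unitInterval.range_sigmoid, mem_Ioo, unitInterval.pos_iff_ne_zero,
    unitInterval.lt_one_iff_ne_one]

/-- Loops as based maps out of the one-point compactification of the line. -/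
def basedMapsHomeomorphUnitLoops :
    {f : C(OnePoint (EuclideanSpace ℝ (Fin 1)), Z) // f ∞ = z} ≃ₜ UnitLoops z :=
  let e := (EuclideanSpace.equiv (Fin 1) ℝ).toHomeomorph.trans (Homeomorph.funUnique (Fin 1) ℝ)
  basedMapsHomeomorphMapsConstOn (isOpenEmbedding_sigmoid.comp e.isOpenEmbedding) (by
    rw [EquivLike.range_comp]
    ext x
    rw [mem_compl_iff, mem_range_sigmoid, mem_insert_iff, mem_singleton_iff]
    tauto) (insert_nonempty _ _) z

/-- Twofold loops as based maps out of the one-point compactification of the plane. -/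
def basedMapsHomeomorphUnitSquares :
    {f : C(OnePoint (EuclideanSpace ℝ (Fin 2)), Z) // f ∞ = z} ≃ₜ UnitSquares z :=
  let e := (EuclideanSpace.equiv (Fin 2) ℝ).toHomeomorph.trans Homeomorph.finTwoArrow
  basedMapsHomeomorphMapsConstOn
    ((isOpenEmbedding_sigmoid.prodMap isOpenEmbedding_sigmoid).comp e.isOpenEmbedding) (by
    rw [EquivLike.range_comp, range_prodMap]
    ext x
    rw [mem_compl_iff, mem_prod, mem_range_sigmoid, mem_range_sigmoid, mem_ofPred_eq]
    tauto) ⟨0, Or.inl rfl⟩ z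

end LoopsAndSquares

/-- Postcomposition with a based homeomorphism. -/
def mapsConstOnCongr {K Y Z : Type*} [TopologicalSpace K] [TopologicalSpace Y]
    [TopologicalSpace Z] (e : Y ≃ₜ Z) (P : Set K) (y : Y) :
    MapsConstOn P y ≃ₜ MapsConstOn P (e y) :=
  ((Homeomorph.refl K).arrowCongr e).subtype fun _ =>
    forall₂_congr fun _ _ => e.injective.eq_iff.symm

section SectorMaps

variable {X : Type*} [TopologicalSpace X] (S₁ S₂ : Set X) (x₀ : X)

/-- Maps from the unit square which collapse its left edge to a point and its right edge to `x₀`,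
and send its bottom edge into `S₁` and its top edge into `S₂`. In polar coordinates `(r, s)` these
are based maps from the one-point compactification of a plane sector with prescribed values on the
two bounding rays. -/
structure IsSectorMap (f : C(I × I, X)) : Prop where
  left : ∀ s, f (0, s) = f (0, 0)
  right : ∀ s, f (1, s) = x₀
  bottom : ∀ r, f (r, 0) ∈ S₁
  top : ∀ r, f (r, 1) ∈ S₂

/-- The space of sector maps. -/
abbrev SectorMaps : Type _ := {f : C(I × I, X) // IsSectorMap S₁ S₂ x₀ f}

/-- Pairs of paths in `S₁` and `S₂` with a common starting point and ending at `x₀`. -/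
abbrev EdgePaths : Type _ :=
  {γ : C(I, S₁) × C(I, S₂) // (γ.1 0 : X) = γ.2 0 ∧ (γ.1 1 : X) = x₀ ∧ (γ.2 1 : X) = x₀}

variable {S₁ S₂ x₀}

/-- Restriction of a sector map to the bottom and top edges. -/
def sectorEdges : C(SectorMaps S₁ S₂ x₀, EdgePaths S₁ S₂ x₀) where
  toFun f :=
    ⟨(⟨fun r => ⟨f.1 (r, 0), f.2.bottom r⟩, by fun_prop⟩,
      ⟨fun r => ⟨f.1 (r, 1), f.2.top r⟩, by fun_prop⟩),
      (f.2.left 1).symm, f.2.right 0, f.2.right 1⟩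
  continuous_toFun := by
    refine Continuous.subtype_mk (.prodMk ?_ ?_) _ <;>
      refine ContinuousMap.continuous_of_continuous_uncurry _ (Continuous.subtype_mk ?_ _) <;>
      fun_prop

theorem sectorEdges_eq_iff {f g : SectorMaps S₁ S₂ x₀} :
    sectorEdges f = sectorEdges g ↔ ∀ r, f.1 (r, 0) = g.1 (r, 0) ∧ f.1 (r, 1) = g.1 (r, 1) := by
  simp only [sectorEdges, ContinuousMap.coe_mk, Subtype.mk.injEq, Prod.mk.injEq,
    ContinuousMap.ext_iff, forall_and]

theorem exists_sectorEdges_eq_iff (g : SectorMaps S₁ S₂ x₀) (f : C(I × I, X)) :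
    (∃ hf : IsSectorMap S₁ S₂ x₀ f, sectorEdges ⟨f, hf⟩ = sectorEdges g) ↔
      ∀ x ∈ squareBoundary, f x = g.1 x := by
  refine ⟨?_, fun h => ?_⟩
  · rintro ⟨hf, hfg⟩ ⟨r, s⟩ hrs
    have hedge := sectorEdges_eq_iff.1 hfg
    rcases hrs with rfl | rfl | rfl | rfl
    · rw [hf.left, g.2.left, (hedge 0).1]
    · rw [hf.right, g.2.right]
    · exact (hedge r).1
    · exact (hedge r).2
  · have hleft (s : I) : f (0, s) = g.1 (0, s) := h _ (.inl rfl)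
    have hright (s : I) : f (1, s) = g.1 (1, s) := h _ (.inr (.inl rfl))
    have hbottom (r : I) : f (r, 0) = g.1 (r, 0) := h _ (.inr (.inr (.inl rfl)))
    have htop (r : I) : f (r, 1) = g.1 (r, 1) := h _ (.inr (.inr (.inr rfl)))
    refine ⟨⟨fun s => ?_, fun s => ?_, fun r => ?_, fun r => ?_⟩,
      sectorEdges_eq_iff.2 fun r => ⟨hbottom r, htop r⟩⟩
    · rw [hleft, hleft, g.2.left]
    · rw [hright, g.2.right]
    · rw [hbottom]
      exact g.2.bottom r
    · rw [htop]
      exact g.2.top r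

section

variable {E : Type*} [NormedAddCommGroup E] [NormedSpace ℝ E] [AddAction E X] [ContinuousVAdd E X]

/-- If translations of the base point extend edge paths to sector maps, continuously in the edge
paths, then a sector map is determined by its edge paths and a twofold loop. -/
def sectorMapsHomeomorph (w : C(EdgePaths S₁ S₂ x₀, C(I × I, E)))
    (hw : ∀ γ, ∃ h : IsSectorMap S₁ S₂ x₀ (w γ +ᵥ .const (I × I) x₀), sectorEdges ⟨_, h⟩ = γ) :
    SectorMaps S₁ S₂ x₀ ≃ₜ EdgePaths S₁ S₂ x₀ × UnitSquares x₀ :=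
  shearHomeomorph sectorEdges (fun γ => Homeomorph.vadd (w γ))
    (by simp only [Homeomorph.vadd_apply]; fun_prop)
    (by simp only [Homeomorph.vadd_symm_apply]; fun_prop) fun γ f => by
      obtain ⟨hγ, hγ'⟩ := hw γ
      refine (hγ' ▸ exists_sectorEdges_eq_iff ⟨_, hγ⟩ _).trans (forall₂_congr fun x _ => ?_)
      exact vadd_left_cancel_iff (w γ x)

/-- The straight line homotopy between two edge paths, read through a coordinate `c`. -/
def edgePathsHomotopy (c : C(↥(S₁ ∪ S₂), E)) : C(EdgePaths S₁ S₂ x₀, C(I × I, E)) where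
  toFun γ := ⟨fun p => AffineMap.lineMap (c (inclusion subset_union_left (γ.1.1 p.1)))
    (c (inclusion subset_union_right (γ.1.2 p.1))) (p.2 : ℝ), by fun_prop⟩
  continuous_toFun := ContinuousMap.continuous_of_continuous_uncurry _ (by
    simp only [Function.uncurry_def, ContinuousMap.coe_mk]
    fun_prop)

theorem exists_sectorEdges_edgePathsHomotopy_vadd_eq {c : C(↥(S₁ ∪ S₂), E)}
    (hc : ∀ x, c x +ᵥ x₀ = x) (γ : EdgePaths S₁ S₂ x₀) :
    ∃ h : IsSectorMap S₁ S₂ x₀ (edgePathsHomotopy c γ +ᵥ .const (I × I) x₀),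
      sectorEdges ⟨_, h⟩ = γ := by
  let f := edgePathsHomotopy c γ +ᵥ ContinuousMap.const (I × I) x₀
  have hf (r s : I) : f (r, s) = AffineMap.lineMap (c (inclusion subset_union_left (γ.1.1 r)))
    (c (inclusion subset_union_right (γ.1.2 r))) (s : ℝ) +ᵥ x₀ := rfl
  have hbottom (r : I) : f (r, 0) = γ.1.1 r := by
    rw [hf, Icc.coe_zero, AffineMap.lineMap_apply_zero, hc, coe_inclusion]
  have htop (r : I) : f (r, 1) = γ.1.2 r := by
    rw [hf, Icc.coe_one, AffineMap.lineMap_apply_one, hc, coe_inclusion]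
  have hconst {r : I} (hr : (γ.1.1 r : X) = γ.1.2 r) (s : I) : f (r, s) = γ.1.1 r := by
    have hincl : inclusion subset_union_right (γ.1.2 r) =
        inclusion (subset_union_left (t := S₂)) (γ.1.1 r) := Subtype.ext hr.symm
    rw [hf, hincl, AffineMap.lineMap_same_apply, hc, coe_inclusion]
  refine ⟨⟨fun s => ?_, fun s => ?_, fun r => ?_, fun r => ?_⟩, ?_⟩
  · exact (hconst γ.2.1 s).trans (hconst γ.2.1 0).symm
  · exact (hconst (γ.2.2.1.trans γ.2.2.2.symm) s).trans γ.2.2.1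
  · exact hbottom r ▸ (γ.1.1 r).2
  · exact htop r ▸ (γ.1.2 r).2
  · exact Subtype.ext (Prod.ext (ContinuousMap.ext fun r => Subtype.ext (hbottom r))
      (ContinuousMap.ext fun r => Subtype.ext (htop r)))

end

/-- The linear path from `c b` to zero. -/
def contractionToZero {B F : Type*} [TopologicalSpace B] [NormedAddCommGroup F] [NormedSpace ℝ F]
    (c : C(B, F)) : C(B, C(I, F)) where
  toFun b := ⟨fun r => AffineMap.lineMap (c b) 0 (r : ℝ), by fun_prop⟩
  continuous_toFun := ContinuousMap.continuous_of_continuous_uncurry _ (by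
    simp only [Function.uncurry_def, ContinuousMap.coe_mk]
    fun_prop)

theorem contractionToZero_vadd_endpoints_iff {B F S : Type*} [TopologicalSpace B]
    [TopologicalSpace S] [NormedAddCommGroup F] [NormedSpace ℝ F] [AddAction F S]
    [ContinuousVAdd F S] (c : C(B, F)) {b : B} {s s₀ : S} (hs : c b +ᵥ s₀ = s) (γ : C(I, S)) :
    (contractionToZero c b +ᵥ γ) 0 = s ∧ (contractionToZero c b +ᵥ γ) 1 = s₀ ↔
      ∀ r ∈ ({0, 1} : Set I), γ r = s₀ := by
  have h₀ : contractionToZero c b 0 = c b := AffineMap.lineMap_apply_zero _ _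
  have h₁ : contractionToZero c b 1 = 0 := AffineMap.lineMap_apply_one _ _
  rw [continuousMap_vadd_apply, continuousMap_vadd_apply, h₀, h₁, zero_vadd, ← hs,
    vadd_left_cancel_iff, forall_mem_insert]
  simp only [mem_singleton_iff, forall_eq]

section

variable (hx₀ : x₀ ∈ S₁ ∩ S₂)

/-- The common starting point of a pair of edge paths. -/
def edgePathsSource : C(EdgePaths S₁ S₂ x₀, ↥(S₁ ∩ S₂)) where
  toFun γ := ⟨γ.1.1 0, (γ.1.1 0).2, γ.2.1 ▸ (γ.1.2 0).2⟩
  continuous_toFun := by fun_prop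

theorem exists_edgePathsSource_eq_iff (b : ↥(S₁ ∩ S₂)) (γ : C(I, S₁) × C(I, S₂)) :
    (∃ hγ : (γ.1 0 : X) = γ.2 0 ∧ (γ.1 1 : X) = x₀ ∧ (γ.2 1 : X) = x₀,
      edgePathsSource ⟨γ, hγ⟩ = b) ↔
      (γ.1 0 = inclusion inter_subset_left b ∧ γ.1 1 = ⟨x₀, hx₀.1⟩) ∧
        γ.2 0 = inclusion inter_subset_right b ∧ γ.2 1 = ⟨x₀, hx₀.2⟩ := by
  obtain ⟨b, hb⟩ := b
  simp only [edgePathsSource, ContinuousMap.coe_mk, Subtype.ext_iff, inclusion_mk, exists_prop]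
  grind

variable {F₁ F₂ : Type*} [NormedAddCommGroup F₁] [NormedSpace ℝ F₁] [AddAction F₁ S₁]
  [ContinuousVAdd F₁ S₁] [NormedAddCommGroup F₂] [NormedSpace ℝ F₂] [AddAction F₂ S₂]
  [ContinuousVAdd F₂ S₂]

/-- A pair of edge paths is determined by its starting point and two loops. -/
def edgePathsHomeomorph {c₁ : C(↥(S₁ ∩ S₂), F₁)} {c₂ : C(↥(S₁ ∩ S₂), F₂)}
    (hc₁ : ∀ b, c₁ b +ᵥ (⟨x₀, hx₀.1⟩ : S₁) = inclusion inter_subset_left b)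
    (hc₂ : ∀ b, c₂ b +ᵥ (⟨x₀, hx₀.2⟩ : S₂) = inclusion inter_subset_right b) :
    EdgePaths S₁ S₂ x₀ ≃ₜ
      ↥(S₁ ∩ S₂) × UnitLoops (⟨x₀, hx₀.1⟩ : S₁) × UnitLoops (⟨x₀, hx₀.2⟩ : S₂) :=
  (shearHomeomorph (q := (· ∈ {γ : C(I, S₁) | ∀ r ∈ ({0, 1} : Set I), γ r = ⟨x₀, hx₀.1⟩} ×ˢ
      {γ : C(I, S₂) | ∀ r ∈ ({0, 1} : Set I), γ r = ⟨x₀, hx₀.2⟩})) edgePathsSource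
    (fun b => (Homeomorph.vadd (contractionToZero c₁ b)).prodCongr
      (Homeomorph.vadd (contractionToZero c₂ b)))
    (by simp only [Homeomorph.coe_prodCongr, Homeomorph.vadd_apply, Prod.map]; fun_prop)
    (by simp only [Homeomorph.prodCongr_symm, Homeomorph.coe_prodCongr,
      Homeomorph.vadd_symm_apply, Prod.map]; fun_prop)
    fun b γ => (exists_edgePathsSource_eq_iff hx₀ b _).trans <|
      and_congr (contractionToZero_vadd_endpoints_iff c₁ (hc₁ b) γ.1)
        (contractionToZero_vadd_endpoints_iff c₂ (hc₂ b) γ.2)).trans <|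
    (Homeomorph.refl _).prodCongr (Homeomorph.Set.prod _ _)

end

theorem nonempty_sectorMaps_homeomorph {E F₁ F₂ : Type*} [NormedAddCommGroup E] [NormedSpace ℝ E]
    [FiniteDimensional ℝ E] [NormedAddCommGroup F₁] [NormedSpace ℝ F₁] [FiniteDimensional ℝ F₁]
    [NormedAddCommGroup F₂] [NormedSpace ℝ F₂] [FiniteDimensional ℝ F₂] (e : X ≃ₜ OnePoint E)
    (e₁ : S₁ ≃ₜ OnePoint F₁) (e₂ : S₂ ≃ₜ OnePoint F₂) (hx₀ : x₀ ∈ S₁ ∩ S₂)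
    (h₁₂ : ¬S₁ ⊆ S₂) (h₂₁ : ¬S₂ ⊆ S₁) (hunion : S₁ ∪ S₂ ≠ univ) :
    Nonempty (SectorMaps S₁ S₂ x₀ ≃ₜ (↥(S₁ ∩ S₂) × UnitLoops (⟨x₀, hx₀.1⟩ : S₁) ×
      UnitLoops (⟨x₀, hx₀.2⟩ : S₂)) × UnitSquares x₀) := by
  obtain ⟨_, _, c, hc⟩ := exists_continuousVAdd_of_ne_univ e hunion (.inl hx₀.1)
  obtain ⟨_, _, c₁, hc₁⟩ := exists_continuousVAdd_of_ne_univ e₁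
    (S := (Subtype.val ⁻¹' S₂ : Set S₁)) (x₀ := ⟨x₀, hx₀.1⟩)
    (by rwa [Ne, preimage_eq_univ_iff, Subtype.range_coe]) hx₀.2
  obtain ⟨_, _, c₂, hc₂⟩ := exists_continuousVAdd_of_ne_univ e₂
    (S := (Subtype.val ⁻¹' S₁ : Set S₂)) (x₀ := ⟨x₀, hx₀.2⟩)
    (by rwa [Ne, preimage_eq_univ_iff, Subtype.range_coe]) hx₀.1
  let i₁ : C(↥(S₁ ∩ S₂), ↥((↑) ⁻¹' S₂ : Set S₁)) := ⟨fun b => ⟨⟨b, b.2.1⟩, b.2.2⟩, by fun_prop⟩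
  let i₂ : C(↥(S₁ ∩ S₂), ↥((↑) ⁻¹' S₁ : Set S₂)) := ⟨fun b => ⟨⟨b, b.2.2⟩, b.2.1⟩, by fun_prop⟩
  exact ⟨(sectorMapsHomeomorph _ (exists_sectorEdges_edgePathsHomotopy_vadd_eq hc)).trans
    ((edgePathsHomeomorph hx₀ (c₁ := c₁.comp i₁) (c₂ := c₂.comp i₂) (fun b => hc₁ (i₁ b))
      fun b => hc₂ (i₂ b)).prodCongr (.refl _))⟩

end SectorMaps

section Compactified

theorem isEmbedding_onePoint_map {V W : Type*} [TopologicalSpace V] [TopologicalSpace W]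
    [T2Space V] [T2Space W] [WeaklyLocallyCompactSpace W] {f : V → W} (hf : IsClosedEmbedding f) :
    IsEmbedding (OnePoint.map f) := by
  have hcont : Continuous (OnePoint.map f) := by
    refine OnePoint.continuous_map hf.continuous ?_
    rw [coclosedCompact_eq_cocompact, coclosedCompact_eq_cocompact]
    exact hf.tendsto_cocompact
  exact (hcont.isClosedEmbedding (Option.map_injective hf.injective)).isEmbedding

/-- The subset `s ∪ {∞}` of the one-point compactification, for a subset `s` of the space. -/
def compactified {V : Type*} (s : Set V) : Set (OnePoint V) := insert ∞ ((↑) '' s)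

section

variable {V : Type*} {s t : Set V}

theorem infty_mem_compactified : ∞ ∈ compactified s := mem_insert _ _

theorem coe_mem_compactified {v : V} : (v : OnePoint V) ∈ compactified s ↔ v ∈ s := by
  simp [compactified]

theorem compactified_inter : compactified s ∩ compactified t = compactified (s ∩ t) := by
  rw [compactified, compactified, compactified, ← insert_inter_distrib,
    image_inter OnePoint.coe_injective]

theorem compactified_union : compactified s ∪ compactified t = compactified (s ∪ t) := by
  rw [compactified, compactified, compactified, ← insert_union_distrib, image_union]

theorem compactified_subset_compactified : compactified s ⊆ compactified t ↔ s ⊆ t :=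
  ⟨fun h _ hv => coe_mem_compactified.1 (h (coe_mem_compactified.2 hv)),
    fun h => insert_subset_insert (image_mono h)⟩

variable [TopologicalSpace V] [T2Space V] [WeaklyLocallyCompactSpace V]

/-- The compactification of a closed subset is the one-point compactification of the subspace. -/
def compactifiedHomeomorph (hs : IsClosed s) : OnePoint s ≃ₜ compactified s :=
  homeomorphSubtypeOfIsEmbedding (p := (· ∈ compactified s))
    (isEmbedding_onePoint_map hs.isClosedEmbedding_subtypeVal) fun y => by
      induction y using OnePoint.rec with
      | infty => exact iff_of_true ⟨∞, rfl⟩ infty_mem_compactified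
      | coe v => simp [OnePoint.exists, coe_mem_compactified]

end

variable {V : Type*} [NormedAddCommGroup V] [NormedSpace ℝ V] [FiniteDimensional ℝ V]

/-- Loops in a sphere, as based maps between standard spheres. -/
def unitLoopsHomeomorph {X : Type*} [TopologicalSpace X] (e : OnePoint V ≃ₜ X) :
    UnitLoops (e ∞) ≃ₜ BasedSphereMaps 1 (Module.finrank ℝ V) :=
  (mapsConstOnCongr (toEuclidean.symm.toHomeomorph.onePointCongr.trans e) _ ∞).symm.trans
    (basedMapsHomeomorphUnitLoops ∞).symm

/-- Twofold loops in a sphere, as based maps between standard spheres. -/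
def unitSquaresHomeomorph :
    UnitSquares (∞ : OnePoint V) ≃ₜ BasedSphereMaps 2 (Module.finrank ℝ V) :=
  (mapsConstOnCongr toEuclidean.symm.toHomeomorph.onePointCongr _ ∞).symm.trans
    (basedMapsHomeomorphUnitSquares ∞).symm

theorem nonempty_sectorMaps_compactified_homeomorph {W₁ W₂ : Submodule ℝ V} (h₁₂ : ¬W₁ ≤ W₂)
    (h₂₁ : ¬W₂ ≤ W₁) :
    Nonempty (SectorMaps (compactified W₁) (compactified W₂) (∞ : OnePoint V) ≃ₜ
      (OnePoint ↥(W₁ ⊓ W₂) × BasedSphereMaps 1 (Module.finrank ℝ W₁) ×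
        BasedSphereMaps 1 (Module.finrank ℝ W₂)) × BasedSphereMaps 2 (Module.finrank ℝ V)) := by
  let e₁ : OnePoint W₁ ≃ₜ compactified (W₁ : Set V) :=
    compactifiedHomeomorph W₁.closed_of_finiteDimensional
  let e₂ : OnePoint W₂ ≃ₜ compactified (W₂ : Set V) :=
    compactifiedHomeomorph W₂.closed_of_finiteDimensional
  let e₁₂ : ↥(compactified (W₁ : Set V) ∩ compactified W₂) ≃ₜ OnePoint ↥(W₁ ⊓ W₂) :=
    (Homeomorph.setCongr compactified_inter).trans
      (compactifiedHomeomorph (W₁ ⊓ W₂).closed_of_finiteDimensional).symm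
  have hunion : compactified (W₁ : Set V) ∪ compactified W₂ ≠ univ := by
    obtain ⟨x, hx₁, hx₂⟩ := SetLike.not_le_iff_exists.1 h₁₂
    obtain ⟨y, hy₂, hy₁⟩ := SetLike.not_le_iff_exists.1 h₂₁
    refine fun h => ?_
    have hxy : x + y ∈ (W₁ : Set V) ∪ W₂ :=
      coe_mem_compactified.1 (compactified_union ▸ h ▸ mem_univ _)
    exact hxy.elim (fun h₁ => hy₁ ((W₁.add_mem_iff_right hx₁).1 h₁))
      fun h₂ => hx₂ ((W₂.add_mem_iff_left hy₂).1 h₂)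
  obtain ⟨e⟩ := nonempty_sectorMaps_homeomorph (.refl _) e₁.symm e₂.symm
    ⟨infty_mem_compactified, infty_mem_compactified⟩
    (fun h => h₁₂ (compactified_subset_compactified.1 h))
    (fun h => h₂₁ (compactified_subset_compactified.1 h)) hunion
  exact ⟨e.trans ((e₁₂.prodCongr ((unitLoopsHomeomorph e₁).prodCongr
    (unitLoopsHomeomorph e₂))).prodCongr unitSquaresHomeomorph)⟩

end Compactified

section EquivariantMaps

/-- The space of `G`-equivariant maps from `L` to `X` sending `l₀` to `x₀`. -/
abbrev EquivariantBasedMaps (G : Type*) {L X : Type*} [TopologicalSpace L] [TopologicalSpace X]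
    [SMul G L] [SMul G X] (l₀ : L) (x₀ : X) : Type _ :=
  {f : C(L, X) // f l₀ = x₀ ∧ ∀ (g : G) (l : L), f (g • l) = g • f l}

variable {G K L X : Type*} [Group G] [Finite G] [TopologicalSpace K] [CompactSpace K]
  [TopologicalSpace L] [T2Space L] [MulAction G L] [ContinuousConstSMul G L] [TopologicalSpace X]
  [MulAction G X] [ContinuousConstSMul G X] {q : C(K, L)} {l₀ : L} {x₀ : X}

theorem isEmbedding_equivariant_comp (hq : ∀ l, ∃ (g : G) (x : K), g • q x = l) :
    IsEmbedding fun f : EquivariantBasedMaps G l₀ x₀ => f.1.comp q := by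
  refine .of_comp (by fun_prop) (g := fun (h : C(K, X)) (g : G) => g • h) (by fun_prop) ?_
  have hcomp : (fun (h : C(K, X)) (g : G) => g • h) ∘
      (fun f : EquivariantBasedMaps G l₀ x₀ => f.1.comp q) =
      (fun (f : C(L, X)) (g : G) => f.comp (g • q)) ∘ Subtype.val :=
    funext₂ fun f g => ContinuousMap.ext fun x => (f.2.2 g (q x)).symm
  rw [hcomp]
  exact (isEmbedding_forall_comp hq).comp .subtypeVal

theorem exists_equivariant_comp_eq_iff (hq : ∀ l, ∃ (g : G) (x : K), g • q x = l) {k₀ : K}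
    (hk₀ : q k₀ = l₀) (f : C(K, X)) :
    (∃ F : EquivariantBasedMaps G l₀ x₀, F.1.comp q = f) ↔
      f k₀ = x₀ ∧ ∀ (g : G) (x y : K), g • q x = q y → g • f x = f y := by
  refine ⟨?_, fun ⟨hbase, hf⟩ => ?_⟩
  · rintro ⟨F, rfl⟩
    refine ⟨(congrArg F.1 hk₀).trans F.2.1, fun g x y h => ?_⟩
    exact (F.2.2 g (q x)).symm.trans (congrArg F.1 h)
  · choose γ ξ hγξ using hq
    have hlift (g : G) (x : K) : γ (g • q x) • f (ξ (g • q x)) = g • f x := by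
      rw [← inv_smul_eq_iff, ← mul_smul]
      refine hf _ _ _ ?_
      rw [mul_smul, hγξ, inv_smul_smul]
    let F : C(L, X) := ⟨fun l => γ l • f (ξ l), continuous_of_forall_comp (Q := fun g : G => g • q)
      (fun l => ⟨γ l, ξ l, hγξ l⟩) fun g => by
        refine (f.continuous.const_smul g).congr fun x => (hlift g x).symm⟩
    have hF (g : G) (x : K) : F (g • q x) = g • f x := hlift g x
    have hFq (x : K) : F (q x) = f x := by simpa only [one_smul] using hF 1 x
    refine ⟨⟨F, hk₀ ▸ (hFq k₀).trans hbase, fun g l => ?_⟩, ContinuousMap.ext hFq⟩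
    rw [← hγξ l, ← mul_smul, hF, hF, mul_smul]

/-- Equivariant based maps, described by their restriction along a map `q` whose image meets every
orbit. -/
def equivariantBasedMapsHomeomorph (hq : ∀ l, ∃ (g : G) (x : K), g • q x = l) {k₀ : K}
    (hk₀ : q k₀ = l₀) :
    EquivariantBasedMaps G l₀ x₀ ≃ₜ
      {f : C(K, X) // f k₀ = x₀ ∧ ∀ (g : G) (x y : K), g • q x = q y → g • f x = f y} :=
  homeomorphSubtypeOfIsEmbedding (isEmbedding_equivariant_comp hq)
    (exists_equivariant_comp_eq_iff hq hk₀)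

end EquivariantMaps

section DihedralAction

open DihedralGroup ComplexConjugate

variable {m : ℕ}

/-- The unit vector `exp (iπt/m)` of the plane. -/
def sectorDir (m : ℕ) (t : ℝ) : Circle := Circle.exp (t * (Real.pi / m))

theorem continuous_sectorDir (m : ℕ) : Continuous (sectorDir m) := by
  unfold sectorDir; fun_prop

theorem sectorDir_add (s t : ℝ) : sectorDir m (s + t) = sectorDir m s * sectorDir m t := by
  rw [sectorDir, add_mul, Circle.exp_add, sectorDir, sectorDir]

theorem conj_sectorDir (t : ℝ) : conj (sectorDir m t : ℂ) = sectorDir m (-t) := by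
  rw [← Circle.coe_inv_eq_conj, sectorDir, ← Circle.exp_neg, sectorDir, neg_mul]

variable [NeZero m]

theorem dihedralAct_r (k : ZMod m) (z : ℂ) : dihedralAct m (r k) z = ZMod.toCircle k * z := by
  rw [ZMod.toCircle_apply]; rfl

theorem dihedralAct_sr (k : ZMod m) (z : ℂ) :
    dihedralAct m (sr k) z = conj (ZMod.toCircle k * z) := by
  rw [ZMod.toCircle_apply]; rfl

/-- The standard dihedral action on the plane. -/
instance dihedralMulAction : MulAction (DihedralGroup m) ℂ where
  smul := dihedralAct m
  one_smul z := by
    refine (dihedralAct_r 0 z).trans ?_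
    rw [AddChar.map_zero_eq_one, Circle.coe_one, one_mul]
  mul_smul g h z := by
    change dihedralAct m (g * h) z = dihedralAct m g (dihedralAct m h z)
    rcases g with k | k <;> rcases h with l | l <;>
      simp only [r_mul_r, r_mul_sr, sr_mul_r, sr_mul_sr, dihedralAct_r, dihedralAct_sr,
        AddChar.map_add_eq_mul, AddChar.map_sub_eq_div, Circle.coe_mul, div_eq_mul_inv,
        Circle.coe_inv_eq_conj, map_mul, Complex.conj_conj] <;> ring

theorem r_smul (k : ZMod m) (z : ℂ) : r k • z = ZMod.toCircle k * z := dihedralAct_r k z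

theorem sr_smul (k : ZMod m) (z : ℂ) : sr k • z = conj (ZMod.toCircle k * z) := dihedralAct_sr k z

instance dihedralContinuousConstSMul : ContinuousConstSMul (DihedralGroup m) ℂ where
  continuous_const_smul g := by
    rcases g with k | k
    · simp only [r_smul]
      fun_prop
    · simp only [sr_smul]
      fun_prop

instance dihedralSMulCommClass : SMulCommClass (DihedralGroup m) ℝ ℂ where
  smul_comm g t z := by
    rcases g with k | k
    · rw [r_smul, r_smul, mul_smul_comm]
    · rw [sr_smul, sr_smul, mul_smul_comm, Complex.real_smul, Complex.real_smul, map_mul,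
        Complex.conj_ofReal]

theorem nnnorm_dihedral_smul (g : DihedralGroup m) (z : ℂ) : ‖g • z‖₊ = ‖z‖₊ := by
  refine NNReal.eq ?_
  rcases g with k | k
  · rw [r_smul, coe_nnnorm, norm_mul, Circle.norm_coe, one_mul, coe_nnnorm]
  · rw [sr_smul, coe_nnnorm, Complex.norm_conj, norm_mul, Circle.norm_coe, one_mul, coe_nnnorm]

theorem sr_smul_eq_self_iff {k : ZMod m} {w : Circle} (hw : sr k • (w : ℂ) = w) (z : ℂ) :
    sr k • z = z ↔ z ∈ ℝ ∙ (w : ℂ) := by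
  refine Iff.trans ?_ Submodule.mem_span_singleton.symm
  refine ⟨fun hz => ?_, ?_⟩
  · have hreal : conj (z / w) = z / w := by
      rw [sr_smul, map_mul] at hw hz
      have hc : conj (ZMod.toCircle k : ℂ) ≠ 0 :=
        (map_ne_zero _).2 (Circle.coe_ne_zero _)
      rw [map_div₀, ← mul_div_mul_left _ _ hc, hw, hz]
    obtain ⟨t, ht⟩ := Complex.conj_eq_iff_real.1 hreal
    exact ⟨t, by rw [Complex.real_smul, ← ht, div_mul_cancel₀ _ w.coe_ne_zero]⟩
  · rintro ⟨t, rfl⟩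
    rw [smul_comm, hw]

theorem sectorDir_eq_sectorDir_iff {s t : ℝ} :
    sectorDir m s = sectorDir m t ↔ ∃ j : ℤ, s = t + 2 * (m * j : ℤ) := by
  have hm : (m : ℝ) ≠ 0 := NeZero.ne _
  rw [sectorDir, sectorDir, Circle.exp_eq_exp]
  refine exists_congr fun j => ?_
  push_cast
  field_simp

theorem surjective_sectorDir : Function.Surjective (sectorDir m) := fun z => by
  have hm : (m : ℝ) ≠ 0 := NeZero.ne _
  refine ⟨(z : ℂ).arg / (Real.pi / m), ?_⟩
  rw [sectorDir, div_mul_cancel₀ _ (div_ne_zero Real.pi_ne_zero hm), Circle.exp_arg]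

theorem sectorDir_two_mul_intCast (k : ℤ) : sectorDir m (2 * k) = ZMod.toCircle (k : ZMod m) := by
  ext
  rw [ZMod.toCircle_intCast, sectorDir, Circle.coe_exp]
  push_cast
  ring_nf

theorem r_smul_sectorDir (k : ℤ) (t : ℝ) :
    (r k : DihedralGroup m) • (sectorDir m t : ℂ) = sectorDir m (2 * k + t) := by
  rw [r_smul, sectorDir_add, sectorDir_two_mul_intCast, Circle.coe_mul]

theorem sr_smul_sectorDir (k : ℤ) (t : ℝ) :
    (sr k : DihedralGroup m) • (sectorDir m t : ℂ) = sectorDir m (-(2 * k + t)) := by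
  rw [sr_smul, ← conj_sectorDir, sectorDir_add, sectorDir_two_mul_intCast, Circle.coe_mul]

theorem exists_smul_sectorDir_eq (z : Circle) :
    ∃ g : DihedralGroup m, ∃ s ∈ I, g • (sectorDir m s : ℂ) = z := by
  obtain ⟨t, rfl⟩ := surjective_sectorDir (m := m) z
  have h₀ := Int.floor_le t
  have h₁ := Int.lt_floor_add_one t
  rcases Int.even_or_odd' ⌊t⌋ with ⟨k, hk | hk⟩ <;> rw [hk] at h₀ h₁ <;> push_cast at h₀ h₁
  · refine ⟨r k, t - 2 * k, ⟨by linarith, by linarith⟩, ?_⟩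
    rw [r_smul_sectorDir, add_sub_cancel]
  · refine ⟨sr (-(k + 1) : ℤ), 2 * (k + 1) - t, ⟨by linarith, by linarith⟩, ?_⟩
    rw [sr_smul_sectorDir]
    push_cast
    ring_nf

theorem r_smul_sectorDir_eq_sectorDir {k : ZMod m} {s t : ℝ} (hs : s ∈ I) (ht : t ∈ I)
    (h : r k • (sectorDir m s : ℂ) = sectorDir m t) : s = t ∧ k = 0 := by
  obtain ⟨hs₀, hs₁⟩ := hs
  obtain ⟨ht₀, ht₁⟩ := ht
  obtain ⟨k, rfl⟩ := ZMod.intCast_surjective k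
  rw [r_smul_sectorDir, Circle.coe_inj, sectorDir_eq_sectorDir_iff] at h
  obtain ⟨j, hj⟩ := h
  have hst : t - s = 2 * (k - m * j : ℤ) := by
    push_cast at hj ⊢
    linarith
  have hzero : k - m * j = 0 := by
    have hlt : ((k - m * j : ℤ) : ℝ) < 1 := by linarith
    have hgt : (-1 : ℝ) < (k - m * j : ℤ) := by linarith
    norm_cast at hlt hgt
    omega
  rw [hzero, Int.cast_zero] at hst
  refine ⟨by linarith, ?_⟩
  rw [sub_eq_zero.1 hzero, Int.cast_mul, Int.cast_natCast, ZMod.natCast_self, zero_mul]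

theorem sr_smul_sectorDir_eq_sectorDir {k : ZMod m} {s t : ℝ} (hs : s ∈ I) (ht : t ∈ I)
    (h : sr k • (sectorDir m s : ℂ) = sectorDir m t) :
    s = t ∧ (k = 0 ∧ s = 0 ∨ k = -1 ∧ s = 1) := by
  obtain ⟨hs₀, hs₁⟩ := hs
  obtain ⟨ht₀, ht₁⟩ := ht
  obtain ⟨k, rfl⟩ := ZMod.intCast_surjective k
  rw [sr_smul_sectorDir, Circle.coe_inj, sectorDir_eq_sectorDir_iff] at h
  obtain ⟨j, hj⟩ := h
  have hst : s + t = -2 * (k + m * j : ℤ) := by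
    push_cast at hj ⊢
    linarith
  have hcases : k + m * j = 0 ∨ k + m * j = -1 := by
    have hlt : ((k + m * j : ℤ) : ℝ) < 1 := by linarith
    have hgt : (-2 : ℝ) < (k + m * j : ℤ) := by linarith
    norm_cast at hlt hgt
    omega
  have hk : (k : ZMod m) = (k + m * j : ℤ) := by
    rw [Int.cast_add, Int.cast_mul, Int.cast_natCast, ZMod.natCast_self, zero_mul, add_zero]
  rw [hk]
  rcases hcases with hzero | hone
  · rw [hzero, Int.cast_zero] at hst ⊢
    exact ⟨by linarith, .inl ⟨rfl, by linarith⟩⟩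
  · rw [hone] at hst ⊢
    push_cast at hst ⊢
    exact ⟨by linarith, .inr ⟨rfl, by linarith⟩⟩

theorem smul_sectorDir_eq_sectorDir {g : DihedralGroup m} {s t : ℝ} (hs : s ∈ I) (ht : t ∈ I)
    (h : g • (sectorDir m s : ℂ) = sectorDir m t) :
    s = t ∧ (g = 1 ∨ g = sr 0 ∧ s = 0 ∨ g = sr (-1) ∧ s = 1) := by
  rcases g with k | k
  · obtain ⟨hst, rfl⟩ := r_smul_sectorDir_eq_sectorDir hs ht h
    exact ⟨hst, .inl rfl⟩
  · obtain ⟨hst, ⟨rfl, hs⟩ | ⟨rfl, hs⟩⟩ := sr_smul_sectorDir_eq_sectorDir hs ht h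
    exacts [⟨hst, .inr (.inl ⟨rfl, hs⟩)⟩, ⟨hst, .inr (.inr ⟨rfl, hs⟩)⟩]

theorem sr_zero_smul_sectorDir_zero :
    (sr 0 : DihedralGroup m) • (sectorDir m 0 : ℂ) = sectorDir m 0 := by
  simpa using sr_smul_sectorDir (m := m) 0 0

theorem sr_neg_one_smul_sectorDir_one :
    (sr (-1) : DihedralGroup m) • (sectorDir m 1 : ℂ) = sectorDir m 1 := by
  have h := sr_smul_sectorDir (m := m) (-1) 1
  norm_num at h
  exact h

end DihedralAction

section SectorPoints

open DihedralGroup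
open scoped NNReal

/-- The unit interval as a compactified half-line, with `0 ↦ 0` and `1 ↦ ∞`. -/
def radialCoord : I ≃ₜ OnePoint ℝ≥0 :=
  ENNReal.orderIsoUnitIntervalBirational.symm.toHomeomorph.trans
    (OnePoint.equivOfIsEmbeddingOfRangeEq ⊤ ((↑) : ℝ≥0 → ENNReal) ENNReal.isEmbedding_coe
      ENNReal.range_coe).symm

theorem radialCoord_zero : radialCoord 0 = (0 : ℝ≥0) := by
  have h : ENNReal.orderIsoUnitIntervalBirational.symm 0 = 0 := OrderIso.map_bot _
  rw [radialCoord, Homeomorph.trans_apply, Homeomorph.symm_apply_eq]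
  exact h

theorem radialCoord_one : radialCoord 1 = ∞ := by
  have h : ENNReal.orderIsoUnitIntervalBirational.symm 1 = ⊤ := OrderIso.map_top _
  rw [radialCoord, Homeomorph.trans_apply, Homeomorph.symm_apply_eq]
  exact h

/-- Polar coordinates on the compactified plane sector of angle `π / m`. -/
def sectorPoint (m : ℕ) : C(I × I, OnePoint ℂ) where
  toFun x := sectorDir m x.2 • OnePoint.map (fun ρ : ℝ≥0 => (ρ : ℂ)) (radialCoord x.1)
  continuous_toFun := by
    have hcoe : IsClosedEmbedding fun ρ : ℝ≥0 => (ρ : ℂ) :=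
      Complex.isometry_ofReal.isClosedEmbedding.comp isClosed_Ici.isClosedEmbedding_subtypeVal
    have hdir := continuous_sectorDir m
    have hmap := (isEmbedding_onePoint_map hcoe).continuous
    have hradius := radialCoord.continuous
    fun_prop

variable {m : ℕ} {r : I} {ρ : ℝ≥0}

theorem sectorPoint_apply (r s : I) :
    sectorPoint m (r, s) = sectorDir m s • OnePoint.map (fun ρ : ℝ≥0 => (ρ : ℂ)) (radialCoord r) :=
  rfl

theorem sectorPoint_of_radialCoord_eq_infty (hr : radialCoord r = ∞) (s : I) :
    sectorPoint m (r, s) = ∞ := by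
  rw [sectorPoint_apply, hr, OnePoint.map_infty, smul_compactification_infty]

theorem sectorPoint_of_radialCoord_eq_coe (hr : radialCoord r = ρ) (s : I) :
    sectorPoint m (r, s) = (((ρ : ℝ) • (sectorDir m s : ℂ) : ℂ) : OnePoint ℂ) := by
  rw [sectorPoint_apply, hr, OnePoint.map_some, smul_compactification_coe, Circle.smul_def,
    Complex.real_smul, smul_eq_mul, mul_comm]

theorem sectorPoint_zero (s : I) : sectorPoint m (0, s) = (0 : ℂ) := by
  rw [sectorPoint_of_radialCoord_eq_coe radialCoord_zero, NNReal.coe_zero, zero_smul]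

theorem sectorPoint_one (s : I) : sectorPoint m (1, s) = ∞ :=
  sectorPoint_of_radialCoord_eq_infty radialCoord_one s

variable [NeZero m]

theorem map_nnnorm_smul_sectorPoint (g : DihedralGroup m) (r s : I) :
    OnePoint.map (fun z : ℂ => ‖z‖₊) (g • sectorPoint m (r, s)) = radialCoord r := by
  cases h : radialCoord r using OnePoint.rec with
  | infty =>
    rw [sectorPoint_of_radialCoord_eq_infty h, smul_compactification_infty, OnePoint.map_infty]
  | coe ρ =>
    have hnorm : ‖(ρ : ℝ) • (sectorDir m s : ℂ)‖₊ = ρ :=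
      NNReal.eq (by rw [coe_nnnorm, norm_smul, Circle.norm_coe, mul_one, NNReal.norm_eq])
    rw [sectorPoint_of_radialCoord_eq_coe h, smul_compactification_coe, OnePoint.map_some,
      nnnorm_dihedral_smul, hnorm]

theorem smul_sectorPoint_eq_self {g : DihedralGroup m} {s : I}
    (hg : g • (sectorDir m s : ℂ) = sectorDir m s) (r : I) :
    g • sectorPoint m (r, s) = sectorPoint m (r, s) := by
  cases h : radialCoord r using OnePoint.rec with
  | infty => rw [sectorPoint_of_radialCoord_eq_infty h, smul_compactification_infty]
  | coe ρ => rw [sectorPoint_of_radialCoord_eq_coe h, smul_compactification_coe, smul_comm, hg]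

theorem exists_smul_sectorPoint_eq (z : OnePoint ℂ) :
    ∃ (g : DihedralGroup m) (x : I × I), g • sectorPoint m x = z := by
  induction z using OnePoint.rec with
  | infty => exact ⟨1, (1, 0), by rw [sectorPoint_one, one_smul]⟩
  | coe z =>
    obtain ⟨g, s, hs, hgs⟩ := exists_smul_sectorDir_eq (m := m) (Circle.exp z.arg)
    refine ⟨g, (radialCoord.symm ‖z‖₊, ⟨s, hs⟩), ?_⟩
    rw [sectorPoint_of_radialCoord_eq_coe (radialCoord.apply_symm_apply _),
      smul_compactification_coe,
      smul_comm, hgs, Circle.coe_exp, Complex.real_smul, coe_nnnorm, Complex.norm_mul_exp_arg_mul_I]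

theorem smul_sectorPoint_eq_sectorPoint {g : DihedralGroup m} {r₁ s₁ r₂ s₂ : I}
    (h : g • sectorPoint m (r₁, s₁) = sectorPoint m (r₂, s₂)) :
    r₁ = r₂ ∧ (r₁ = 0 ∨ r₁ = 1 ∨
      s₁ = s₂ ∧ (g = 1 ∨ g = sr 0 ∧ s₁ = 0 ∨ g = sr (-1) ∧ s₁ = 1)) := by
  obtain rfl : r₁ = r₂ := radialCoord.injective <| by
    rw [← map_nnnorm_smul_sectorPoint g r₁ s₁, h,
      ← map_nnnorm_smul_sectorPoint (1 : DihedralGroup m) r₂ s₂, one_smul]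
  refine ⟨rfl, ?_⟩
  cases hr : radialCoord r₁ using OnePoint.rec with
  | infty => exact .inr (.inl (radialCoord.injective (hr.trans radialCoord_one.symm)))
  | coe ρ =>
    rcases eq_or_ne ρ 0 with rfl | hρ
    · exact .inl (radialCoord.injective (hr.trans radialCoord_zero.symm))
    rw [sectorPoint_of_radialCoord_eq_coe hr, sectorPoint_of_radialCoord_eq_coe hr,
      smul_compactification_coe, smul_comm, OnePoint.coe_eq_coe] at h
    obtain ⟨hst, hg⟩ := smul_sectorDir_eq_sectorDir s₁.2 s₂.2
      (smul_right_injective ℂ (NNReal.coe_ne_zero.2 hρ) h)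
    refine .inr (.inr ⟨Subtype.ext hst, ?_⟩)
    simpa only [Subtype.ext_iff, Icc.coe_zero, Icc.coe_one] using hg

end SectorPoints

section FundamentalSector

open DihedralGroup

variable {m : ℕ} {X : Type*} [MulAction (DihedralGroup m) X]

theorem smul_eq_self_of_mem_fixedBy {x : X} (h₀ : x ∈ MulAction.fixedBy X (sr 0 : DihedralGroup m))
    (h₁ : x ∈ MulAction.fixedBy X (sr (-1) : DihedralGroup m)) (g : DihedralGroup m) :
    g • x = x := by
  let H := MulAction.stabilizer (DihedralGroup m) x
  have hr₁ : r 1 ∈ H := by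
    have h : sr (-1) * sr 0 ∈ H := mul_mem h₁ h₀
    rwa [sr_mul_sr, sub_neg_eq_add, zero_add] at h
  have hr (k : ZMod m) : r k ∈ H := by
    obtain ⟨j, rfl⟩ := ZMod.intCast_surjective k
    exact r_one_zpow (n := m) j ▸ zpow_mem hr₁ j
  change g ∈ H
  rcases g with k | k
  · exact hr k
  · have h : sr 0 * r k ∈ H := mul_mem h₀ (hr k)
    rwa [sr_mul_r, zero_add] at h

variable [TopologicalSpace X] [NeZero m] {x₀ : X}

theorem isSectorMap_fixedBy_iff (f : C(I × I, X)) :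
    IsSectorMap (MulAction.fixedBy X (sr 0 : DihedralGroup m))
        (MulAction.fixedBy X (sr (-1) : DihedralGroup m)) x₀ f ↔
      f (1, 0) = x₀ ∧ ∀ (g : DihedralGroup m) (x y : I × I),
        g • sectorPoint m x = sectorPoint m y → g • f x = f y := by
  refine ⟨fun hf => ⟨hf.right 0, ?_⟩, fun ⟨hbase, hf⟩ => ⟨fun s => ?_, fun s => ?_, fun r => ?_,
    fun r => ?_⟩⟩
  · rintro g ⟨r₁, s₁⟩ ⟨r₂, s₂⟩ h
    have hfixed {r : I} (hr : ∀ s, f (r, s) = f (r, 0)) : g • f (r, s₁) = f (r, s₂) := by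
      rw [hr s₁, hr s₂]
      exact smul_eq_self_of_mem_fixedBy (hf.bottom r) (hr 1 ▸ hf.top r) g
    obtain ⟨rfl, rfl | rfl | ⟨rfl, rfl | ⟨rfl, rfl⟩ | ⟨rfl, rfl⟩⟩⟩ :=
      smul_sectorPoint_eq_sectorPoint h
    · exact hfixed hf.left
    · exact hfixed fun s => (hf.right s).trans (hf.right 0).symm
    · exact one_smul _ _
    · exact hf.bottom r₁
    · exact hf.top r₁
  · simpa only [one_smul] using hf 1 (0, s) (0, 0) (by rw [one_smul, sectorPoint_zero,
      sectorPoint_zero])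
  · rw [← hbase]
    simpa only [one_smul] using hf 1 (1, s) (1, 0) (by rw [one_smul, sectorPoint_one,
      sectorPoint_one])
  · exact hf _ _ _ (smul_sectorPoint_eq_self sr_zero_smul_sectorDir_zero r)
  · exact hf _ _ _ (smul_sectorPoint_eq_self sr_neg_one_smul_sectorDir_one r)

/-- Equivariant based maps, described by their restriction to a fundamental sector of the
compactified plane. -/
def dihedralMapsHomeomorph [ContinuousConstSMul (DihedralGroup m) X] :
    EquivariantBasedMaps (DihedralGroup m) (∞ : OnePoint ℂ) x₀ ≃ₜ
      SectorMaps (MulAction.fixedBy X (sr 0 : DihedralGroup m))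
        (MulAction.fixedBy X (sr (-1) : DihedralGroup m)) x₀ :=
  (equivariantBasedMapsHomeomorph exists_smul_sectorPoint_eq (sectorPoint_one 0)).trans
    (Homeomorph.setCongr (Set.ext fun f => (isSectorMap_fixedBy_iff f).symm))

end FundamentalSector

section PlaneTimesSpace

open DihedralGroup

theorem fixedBy_onePoint {G X : Type*} [Group G] [MulAction G X] (g : G) :
    MulAction.fixedBy (OnePoint X) g = compactified (MulAction.fixedBy X g) := by
  ext x
  induction x using OnePoint.rec with
  | infty => exact iff_of_true (smul_compactification_infty g) infty_mem_compactified
  | coe x =>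
    rw [coe_mem_compactified, MulAction.mem_fixedBy, smul_compactification_coe, OnePoint.coe_eq_coe,
      MulAction.mem_fixedBy]

theorem finrank_submodule_prod {K M N : Type*} [DivisionRing K] [AddCommGroup M] [AddCommGroup N]
    [Module K M] [Module K N] [FiniteDimensional K M] [FiniteDimensional K N]
    (p : Submodule K M) (q : Submodule K N) :
    Module.finrank K (p.prod q) = Module.finrank K p + Module.finrank K q := by
  have hinj : Function.Injective (p.subtype.prodMap q.subtype) :=
    p.subtype_injective.prodMap q.subtype_injective
  rw [← Module.finrank_prod, ← LinearMap.finrank_range_of_inj hinj, LinearMap.range_prodMap,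
    p.range_subtype, q.range_subtype]

theorem not_prod_top_le_prod_top {K M N : Type*} [Semiring K] [AddCommMonoid M] [AddCommMonoid N]
    [Module K M] [Module K N] {p q : Submodule K M} (hpq : Disjoint p q) (hp : p ≠ ⊥) :
    ¬p.prod (⊤ : Submodule K N) ≤ q.prod ⊤ := fun h =>
  hp (hpq.eq_bot_of_le fun x hx => (h (x := (x, 0)) ⟨hx, trivial⟩).1)

theorem nonempty_sectorMaps_prod_top_homeomorph {E V : Type*} [NormedAddCommGroup E]
    [NormedSpace ℝ E] [FiniteDimensional ℝ E] [NormedAddCommGroup V] [NormedSpace ℝ V]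
    [FiniteDimensional ℝ V] {L₁ L₂ : Submodule ℝ E} (hL : Disjoint L₁ L₂) (hL₁ : L₁ ≠ ⊥)
    (hL₂ : L₂ ≠ ⊥) :
    Nonempty (SectorMaps (compactified (L₁.prod (⊤ : Submodule ℝ V)))
        (compactified (L₂.prod (⊤ : Submodule ℝ V))) (∞ : OnePoint (E × V)) ≃ₜ
      BasedSphereMaps 1 (Module.finrank ℝ L₁ + Module.finrank ℝ V) ×
        BasedSphereMaps 1 (Module.finrank ℝ L₂ + Module.finrank ℝ V) ×
        OnePoint V × BasedSphereMaps 2 (Module.finrank ℝ E + Module.finrank ℝ V)) := by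
  have hinter : Module.finrank ℝ ↥(L₁.prod (⊤ : Submodule ℝ V) ⊓ L₂.prod ⊤) =
      Module.finrank ℝ V := by
    rw [Submodule.prod_inf_prod, hL.eq_bot, finrank_submodule_prod, finrank_bot, inf_top_eq,
      finrank_top, zero_add]
  obtain ⟨e⟩ := nonempty_sectorMaps_compactified_homeomorph
    (not_prod_top_le_prod_top (N := V) hL hL₁) (not_prod_top_le_prod_top hL.symm hL₂)
  rw [finrank_submodule_prod, finrank_submodule_prod, finrank_top, Module.finrank_prod] at e
  let eV : OnePoint ↥(L₁.prod (⊤ : Submodule ℝ V) ⊓ L₂.prod ⊤) ≃ₜ OnePoint V :=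
    (ContinuousLinearEquiv.ofFinrankEq hinter).toHomeomorph.onePointCongr
  exact ⟨e.trans ((((eV.prodCongr (.refl _)).trans (.prodComm _ _)).prodCongr (.refl _)).trans
    ((Homeomorph.prodAssoc _ _ _).trans (.prodAssoc _ _ _)))⟩

variable {m : ℕ} [NeZero m]

theorem disjoint_span_sectorDir (hm : m ≠ 1) :
    Disjoint (ℝ ∙ (sectorDir m 0 : ℂ)) (ℝ ∙ (sectorDir m 1 : ℂ)) := by
  refine Submodule.disjoint_def.2 fun z h₀ h₁ => ?_
  have hz : r 1 • z = z := smul_eq_self_of_mem_fixedBy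
    ((sr_smul_eq_self_iff sr_zero_smul_sectorDir_zero z).2 h₀)
    ((sr_smul_eq_self_iff sr_neg_one_smul_sectorDir_one z).2 h₁) (r 1)
  have hone : (ZMod.toCircle (1 : ZMod m) : ℂ) ≠ 1 := fun h => by
    have := Fact.mk (show 1 < m by have := NeZero.ne m; omega)
    refine one_ne_zero (ZMod.injective_toCircle ((Circle.coe_eq_one.1 h).trans ?_))
    exact (AddChar.map_zero_eq_one _).symm
  exact (mul_left_eq_self₀.1 ((r_smul 1 z).symm.trans hz)).resolve_left hone

variable {V : Type*}

/-- The action of the dihedral group on the first factor of `ℂ × V`. -/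
abbrev dihedralProdMulAction : MulAction (DihedralGroup m) (ℂ × V) where
  smul g p := (g • p.1, p.2)
  one_smul p := Prod.ext (one_smul _ p.1) rfl
  mul_smul g h p := Prod.ext (mul_smul g h p.1) rfl

attribute [local instance] dihedralProdMulAction

theorem dihedralProd_continuousConstSMul [TopologicalSpace V] :
    ContinuousConstSMul (DihedralGroup m) (ℂ × V) where
  continuous_const_smul g := (continuous_fst.const_smul g).prodMk continuous_snd

theorem fixedBy_sr_prod [AddCommGroup V] [Module ℝ V] {k : ZMod m} {w : Circle}
    (hw : sr k • (w : ℂ) = w) :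
    MulAction.fixedBy (ℂ × V) (sr k) = ((ℝ ∙ (w : ℂ)).prod ⊤ : Submodule ℝ (ℂ × V)) := by
  ext p
  refine Prod.ext_iff.trans ((and_congr_left' (sr_smul_eq_self_iff hw p.1)).trans ?_)
  exact and_congr_right' (iff_of_true rfl trivial)

theorem equivariant_maps_dihedral_htpyEquiv_general [NormedAddCommGroup V] [NormedSpace ℝ V]
    [FiniteDimensional ℝ V] (hm : m ≠ 1) :
    Nonempty ({f : C(OnePoint ℂ, OnePoint (ℂ × V)) //
        f ∞ = ∞ ∧ ∀ (g : DihedralGroup m) (x : OnePoint ℂ),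
          f (OnePoint.map (dihedralAct m g) x) =
            OnePoint.map (fun p => (dihedralAct m g p.1, p.2)) (f x)} ≃ₜ
      BasedSphereMaps 1 (1 + Module.finrank ℝ V) × BasedSphereMaps 1 (1 + Module.finrank ℝ V) ×
        OnePoint V × BasedSphereMaps 2 (2 + Module.finrank ℝ V)) := by
  have := dihedralProd_continuousConstSMul (m := m) (V := V)
  have hspan (t : ℝ) : ℝ ∙ (sectorDir m t : ℂ) ≠ ⊥ :=
    Submodule.span_singleton_eq_bot.not.2 (Circle.coe_ne_zero _)
  have hfinrank (t : ℝ) : Module.finrank ℝ (ℝ ∙ (sectorDir m t : ℂ)) = 1 :=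
    finrank_span_singleton (Circle.coe_ne_zero _)
  let restrict := dihedralMapsHomeomorph (m := m) (x₀ := (∞ : OnePoint (ℂ × V)))
  rw [fixedBy_onePoint, fixedBy_onePoint, fixedBy_sr_prod sr_zero_smul_sectorDir_zero,
    fixedBy_sr_prod sr_neg_one_smul_sectorDir_one] at restrict
  obtain ⟨e⟩ := nonempty_sectorMaps_prod_top_homeomorph (V := V) (disjoint_span_sectorDir hm)
    (hspan 0) (hspan 1)
  rw [hfinrank, hfinrank, Complex.finrank_real_complex] at e
  exact ⟨restrict.trans e⟩

end PlaneTimesSpace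

theorem equivariant_maps_dihedral_htpyEquiv (n : ℕ) (hn : 2 ≤ n) :
    Nonempty (ContinuousMap.HomotopyEquiv
      {f : C(OnePoint ℂ, OnePoint (ℂ × ℝ)) //
        f OnePoint.infty = OnePoint.infty ∧
        ∀ (g : DihedralGroup (2 ^ (n - 1))) (x : OnePoint ℂ),
          f (OnePoint.map (dihedralAct (2 ^ (n - 1)) g) x) =
            OnePoint.map (fun p => (dihedralAct (2 ^ (n - 1)) g p.1, p.2)) (f x)}
      (BasedSphereMaps 1 2 × BasedSphereMaps 1 2 × OnePoint ℝ ×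
        BasedSphereMaps 2 3)) := by
  have h := equivariant_maps_dihedral_htpyEquiv_general (m := 2 ^ (n - 1)) (V := ℝ)
    (Nat.one_lt_two_pow (by omega)).ne'
  rw [Module.finrank_self] at h
  exact h.map Homeomorph.toHomotopyEquiv

end
end
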